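/- Let δ := {(x,x) : 0 ≤ x ≤ 1} be the diagonal. Then the inverse map g : Ω₁ → B₁ of ∇wᵀ is real-analytic on Ω₁ ∖ δ, and consequently the function u(x) = ⟨x, g(x)⟩ − w(g(x)) is real-analytic on each of the two connected components of Ω₁ ∖ δ. -/

import Mathlib

/-!
Write points of the sector as `psi (s, θ) = (exp s cos θ, exp s sin θ)` with `s < 0`, and set
`V (s, θ) = W (exp s) θ`. This is a series `∑ cₙ exp (mₙ² s) sin (mₙ θ)`: it solves the backward heat
equation `V_s + V_θθ = 0` and is real-analytic for `s < 0`, being the imaginary part of an exponential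
series of linear forms (`analyticAt_expSeries`).

**Analyticity of `g`.** In these coordinates the gradient map is `Gmap`, and by the heat equation its
differential is, up to a rotation and a positive factor, the matrix with rows `(V_ss - V_s, T)` and
`(T, 0)`, where `T = V_sθ - V_θ` (`hasFDerivAt_Gmap`). The coefficients of `W` make `T` a positive
multiple of the theta function `∑ x^{n(n+1)} cos ((2n+1) 2θ)` with `x = exp (16 s)` (`Tm_eq`). By the
Jacobi triple product, proved here from a finite version (`thetaProd_eq`), this function vanishes on
`0 < θ < π/2` only at `θ = π/4` (`theta_ne_zero`), and the ray `θ = π/4` is mapped into the diagonal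
(`Gmap_diag`). Hence off the diagonal the analytic inverse function theorem applies, and
`g = psi ∘ K` locally with `K` an analytic local inverse of `Gmap`.

**Analyticity of `u`.** It remains to show that the minimax formula equals `⟨x, g x⟩ - w (g x)`
(`u_eq`). Let `Φ (r, θ)` be the function in the minimax, `F θ` its maximum over `r`, and
`psi (s₀, θ₀) = g (x, y)`. The triple product also shows that `T` is nonincreasing in `θ`, so
`V_ss - V_s ≥ 0` (`Vss_sub_nonneg`) and `s ↦ exp (-s) V_s` is nondecreasing. It follows that
`F θ₀ = Φ (exp s₀, θ₀)` (`Fmax_eq`), which is the Legendre expression. That `θ₀` minimises `F`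
follows from a viscosity-type argument (`le_of_touchedBelow`): at every interior angle `F` is touched
from below by `Φ (r, ·)` with `r` maximising, and this function has nonnegative second derivative there
(`touchedBelow_Fmax`). For `0 < r < 1` this is the heat equation together with stationarity in `r`; for
`r = 1` it uses the boundary values `W (1, θ) = cos θ + sin θ - 1` (`W_one_eq`), a Fourier series
computation.
-/

open Real Set Topology Filter

/-- `mIdx n = 4(n+1) - 2 = 4n + 2`, the odd-indexed frequencies `2, 6, 10, …`. -/
def mIdx (n : ℕ) : ℕ := 4 * n + 2

/-- `W(r,θ) = (8/π) ∑_{n≥1} r^{mₙ²} sin(mₙ θ) / ((mₙ² − 1) mₙ)` with `mₙ = 4n − 2`. -/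
noncomputable def W (r θ : ℝ) : ℝ :=
  (8 / π) * ∑' n : ℕ,
    r ^ (mIdx n ^ 2) * Real.sin ((mIdx n : ℝ) * θ) / (((mIdx n : ℝ) ^ 2 - 1) * (mIdx n : ℝ))

/-- The minimax formula `u(x,y) = min_{θ∈[0,π/2]} max_{r∈[0,1]} ( r(x cos θ + y sin θ) − W(r,θ) )`.
(The extrema are attained, so `⨅`/`⨆` over the compact index sets agree with min/max.) -/
noncomputable def u (x y : ℝ) : ℝ :=
  ⨅ θ : Icc (0 : ℝ) (π / 2), ⨆ r : Icc (0 : ℝ) 1,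
    ((r : ℝ) * (x * Real.cos (θ : ℝ) + y * Real.sin (θ : ℝ)) - W (r : ℝ) (θ : ℝ))

/-- `w` in Cartesian coordinates: `w(r cos θ, r sin θ) = W(r,θ)`.  On the open sector `B₁`
(where `p, q > 0`) this is `W(√(p²+q²), arctan(q/p))`. -/
noncomputable def w (p q : ℝ) : ℝ := W (Real.sqrt (p ^ 2 + q ^ 2)) (Real.arctan (q / p))

/-- First partial `w_p`. -/
noncomputable def wp (p q : ℝ) : ℝ := deriv (fun s => w s q) p
/-- First partial `w_q`. -/
noncomputable def wq (p q : ℝ) : ℝ := deriv (fun t => w p t) q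
/-- Second partial `w_{pp}`. -/
noncomputable def wpp (p q : ℝ) : ℝ := deriv (fun s => wp s q) p
/-- Second partial `w_{qq}`. -/
noncomputable def wqq (p q : ℝ) : ℝ := deriv (fun t => wq p t) q
/-- Mixed second partial `w_{pq}`. -/
noncomputable def wpq (p q : ℝ) : ℝ := deriv (fun t => wp p t) q

/-- The open sector `B₁` in the first quadrant. -/
def B1 : Set (ℝ × ℝ) := {p : ℝ × ℝ | 0 < p.1 ∧ 0 < p.2 ∧ p.1 ^ 2 + p.2 ^ 2 < 1}

/-- The open unit square `Ω₁ = (0,1)²`. -/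
def Ω1 : Set (ℝ × ℝ) := (Ioo (0 : ℝ) 1) ×ˢ Ioo (0 : ℝ) 1

/-- The (transposed) gradient map `∇wᵀ : (p,q) ↦ (w_p, w_q)`. -/
noncomputable def gradw (p : ℝ × ℝ) : ℝ × ℝ := (wp p.1 p.2, wq p.1 p.2)

/-- The diagonal of the (closed) unit square, as a subset of `ℝ²`. -/
def diag : Set (ℝ × ℝ) := {x : ℝ × ℝ | x.1 = x.2}

/-! ### Analyticity of exponential series -/

/-- The degree-`k` homogeneous term `y ↦ b * (L y) ^ k / k!` of the Taylor expansion of `b * exp (L y)`. -/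
noncomputable def expTerm {E : Type*} [NormedAddCommGroup E] [NormedSpace ℝ E]
    (b : ℂ) (L : E →L[ℝ] ℂ) (k : ℕ) : ContinuousMultilinearMap ℝ (fun _ : Fin k => E) ℂ :=
  (b / (k.factorial : ℂ)) •
    (ContinuousMultilinearMap.mkPiAlgebraFin ℝ k ℂ).compContinuousLinearMap (fun _ => L)

section
variable {E : Type*} [NormedAddCommGroup E] [NormedSpace ℝ E]

lemma expTerm_apply (b : ℂ) (L : E →L[ℝ] ℂ) (k : ℕ) (y : E) :
    expTerm b L k (fun _ => y) = b * ((L y) ^ k / (k.factorial : ℂ)) := by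
  simp [expTerm, List.ofFn_const]
  ring

lemma norm_expTerm_le (b : ℂ) (L : E →L[ℝ] ℂ) (k : ℕ) :
    ‖expTerm b L k‖ ≤ ‖b‖ * (‖L‖ ^ k / (k.factorial : ℝ)) := by
  unfold expTerm
  rw [norm_smul, norm_div, Complex.norm_natCast, div_mul_eq_mul_div, mul_div_assoc]
  gcongr
  refine (ContinuousMultilinearMap.norm_compContinuousLinearMap_le _ _).trans ?_
  simp

/-- If `∑ ‖aₙ exp (Lₙ x)‖ exp (ρ ‖Lₙ‖)` converges, then `y ↦ ∑ aₙ exp (Lₙ y)` has a power series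
at `x`: expand each exponential and exchange the two absolutely convergent sums.
The summability of the linear terms is recorded because it allows evaluating the derivative termwise. -/
lemma hasFPowerSeries_expSeries (a : ℕ → ℂ) (L : ℕ → E →L[ℝ] ℂ) (x : E) {ρ : ℝ} (hρ : 0 < ρ)
    (hs : Summable fun n => ‖a n * Complex.exp (L n x)‖ * Real.exp (ρ * ‖L n‖)) :
    HasFPowerSeriesAt (fun y => ∑' n, a n * Complex.exp (L n y))
      (fun k => ∑' n, expTerm (a n * Complex.exp (L n x)) (L n) k) x ∧
    Summable (fun n => expTerm (a n * Complex.exp (L n x)) (L n) 1) := by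
  set b : ℕ → ℂ := fun n => a n * Complex.exp (L n x) with hb
  -- the double series `∑ₙ ∑ₖ ‖bₙ‖ (ρ ‖Lₙ‖)ᵏ / k!` converges
  have hdouble : Summable (fun p : ℕ × ℕ =>
      ‖b p.1‖ * ((ρ * ‖L p.1‖) ^ p.2 / (p.2.factorial : ℝ))) := by
    have h0 : ∀ p : ℕ × ℕ, 0 ≤ ‖b p.1‖ * ((ρ * ‖L p.1‖) ^ p.2 / (p.2.factorial : ℝ)) :=
      fun p => by positivity
    refine (summable_prod_of_nonneg h0).mpr
      ⟨fun n => (Real.summable_pow_div_factorial (ρ * ‖L n‖)).mul_left ‖b n‖, ?_⟩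
    have h1 : ∀ n, ∑' k : ℕ, ‖b n‖ * ((ρ * ‖L n‖) ^ k / (k.factorial : ℝ)) =
        ‖b n‖ * Real.exp (ρ * ‖L n‖) := fun n => by
      rw [tsum_mul_left, Real.exp_eq_exp_ℝ, NormedSpace.exp_eq_tsum_div]
    exact hs.congr fun n => (h1 n).symm
  have hdouble' : Summable (fun p : ℕ × ℕ =>
      ‖b p.2‖ * ((ρ * ‖L p.2‖) ^ p.1 / (p.1.factorial : ℝ))) :=
    (Equiv.prodComm ℕ ℕ).summable_iff.mpr hdouble
  have hTs : ∀ p : ℕ × ℕ, ‖expTerm (b p.2) (L p.2) p.1‖ * ρ ^ p.1 ≤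
      ‖b p.2‖ * ((ρ * ‖L p.2‖) ^ p.1 / (p.1.factorial : ℝ)) := fun p => by
    calc _ ≤ (‖b p.2‖ * (‖L p.2‖ ^ p.1 / (p.1.factorial : ℝ))) * ρ ^ p.1 := by
          gcongr; exact norm_expTerm_le _ _ _
      _ = _ := by rw [mul_pow]; ring
  have hT : Summable (fun p : ℕ × ℕ => ‖expTerm (b p.2) (L p.2) p.1‖ * ρ ^ p.1) :=
    Summable.of_nonneg_of_le (fun p => by positivity) hTs hdouble'
  have hTk : ∀ k, Summable (fun n => ‖expTerm (b n) (L n) k‖) := fun k => by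
    have := (hT.prod_factor k).mul_right ((ρ ^ k)⁻¹)
    refine this.congr fun n => ?_
    field_simp
  refine ⟨⟨ENNReal.ofReal ρ, ?_⟩, (hTk 1).of_norm⟩
  refine ⟨?_, by simpa using hρ, ?_⟩
  · have : Summable fun k => ‖∑' n, expTerm (b n) (L n) k‖ * ρ ^ k := by
      refine Summable.of_nonneg_of_le (fun p => by positivity) (fun k => ?_) hT.prod
      refine le_of_le_of_eq ?_ (tsum_mul_right (f := fun n => ‖expTerm (b n) (L n) k‖) (a := ρ ^ k)).symm
      gcongr
      exact norm_tsum_le_tsum_norm (hTk k)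
    have h2 := FormalMultilinearSeries.le_radius_of_summable (r := ρ.toNNReal)
      (fun k => ∑' n, expTerm (b n) (L n) k)
      (by simpa [Real.coe_toNNReal _ hρ.le] using this)
    exact h2
  · intro y hy
    have hy' : ‖y‖ ≤ ρ := by
      have : ‖y‖ < ρ := by
        rw [Metric.mem_eball, edist_zero_right, ← ofReal_norm] at hy
        exact (ENNReal.ofReal_lt_ofReal_iff hρ).mp hy
      exact this.le
    have hsum : Summable (fun p : ℕ × ℕ => expTerm (b p.2) (L p.2) p.1 (fun _ => y)) := by
      refine Summable.of_norm_bounded hT (fun p => ?_)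
      refine ((expTerm (b p.2) (L p.2) p.1).le_opNorm _).trans ?_
      simp only [Finset.prod_const, Finset.card_univ, Fintype.card_fin]
      gcongr
    have h1 := hsum.hasSum.prod_fiberwise (fun k => (hsum.prod_factor k).hasSum)
    have h3 : ∑' p : ℕ × ℕ, expTerm (b p.2) (L p.2) p.1 (fun _ => y) =
        ∑' n, a n * Complex.exp (L n (x + y)) := by
      refine hsum.tsum_prod.trans ((Summable.tsum_comm
        (f := fun k n => expTerm (b n) (L n) k (fun _ => y)) hsum).symm.trans ?_)
      congr 1; ext n
      simp only [expTerm_apply]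
      rw [tsum_mul_left, map_add, Complex.exp_add, ← mul_assoc, Complex.exp_eq_exp_ℂ,
        NormedSpace.exp_eq_tsum_div (𝔸 := ℂ)]
      simp only [hb, Complex.exp_eq_exp_ℂ,
        NormedSpace.exp_eq_tsum_div (𝔸 := ℂ)]
    rw [h3] at h1
    have h4 : (fun k => (∑' n, expTerm (b n) (L n) k) (fun _ => y)) =
        fun k => ∑' n, expTerm (b n) (L n) k (fun _ => y) :=
      funext fun k => ContinuousMultilinearMap.tsum_eval (hTk k).of_norm _
    refine (congrArg (fun F => HasSum F _) h4).mpr h1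

theorem analyticAt_expSeries (a : ℕ → ℂ) (L : ℕ → E →L[ℝ] ℂ) (x : E) {ρ : ℝ} (hρ : 0 < ρ)
    (hs : Summable fun n => ‖a n * Complex.exp (L n x)‖ * Real.exp (ρ * ‖L n‖)) :
    AnalyticAt ℝ (fun y => ∑' n, a n * Complex.exp (L n y)) x :=
  (hasFPowerSeries_expSeries a L x hρ hs).1.analyticAt

/-- The derivative of an exponential series may be computed term by term. -/
theorem hasFDerivAt_expSeries (a : ℕ → ℂ) (L : ℕ → E →L[ℝ] ℂ) (x : E) {ρ : ℝ} (hρ : 0 < ρ)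
    (hs : Summable fun n => ‖a n * Complex.exp (L n x)‖ * Real.exp (ρ * ‖L n‖)) :
    ∃ D : E →L[ℝ] ℂ, HasFDerivAt (fun y => ∑' n, a n * Complex.exp (L n y)) D x ∧
      ∀ v, D v = ∑' n, a n * L n v * Complex.exp (L n x) := by
  obtain ⟨h, hsum⟩ := hasFPowerSeries_expSeries a L x hρ hs
  refine ⟨_, h.hasFDerivAt, fun v => ?_⟩
  rw [continuousMultilinearCurryFin1_apply]
  have : (Fin.snoc 0 v : Fin 1 → E) = fun _ => v := by
    ext i; fin_cases i; rfl
  rw [this, ContinuousMultilinearMap.tsum_eval hsum]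
  congr 1; ext n
  rw [expTerm_apply]
  simp; ring
end

/-! ### Heat series in logarithmic polar coordinates -/

/-- The frequencies `2, 6, 10, …` as real numbers. -/
noncomputable def mR (n : ℕ) : ℝ := (mIdx n : ℝ)

lemma mR_ge (n : ℕ) : 2 ≤ mR n := by
  have h : 2 ≤ mIdx n := by unfold mIdx; omega
  unfold mR; exact_mod_cast h

lemma le_mR_sq (n : ℕ) : (n : ℝ) ≤ mR n ^ 2 := by
  have h : n ≤ mIdx n := by unfold mIdx; omega
  have h' : (n : ℝ) ≤ mR n := by unfold mR; exact_mod_cast h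
  nlinarith [mR_ge n]

/-- Multiplication of a coefficient sequence by the frequencies, i.e. the effect on coefficients of
one differentiation in `θ`. Applying it twice corresponds to one differentiation in `s`. -/
noncomputable def mm (a : ℕ → ℝ) : ℕ → ℝ := fun n => mR n * a n

/-- Coefficient sequences whose Gaussian sums `∑ |aₙ| exp (b mₙ²)` converge for every `b < 0`.
The class is closed under `mm`, so all formal derivatives of such series converge as well. -/
def Adm (a : ℕ → ℝ) : Prop := ∀ b < 0, Summable fun n => |a n| * Real.exp (b * mR n ^ 2)

lemma adm_of_bdd {a : ℕ → ℝ} {C : ℝ} (h : ∀ n, |a n| ≤ C) : Adm a := by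
  intro b hb
  have hC : 0 ≤ C := (abs_nonneg _).trans (h 0)
  have hg : Summable fun n : ℕ => C * Real.exp (n * b) :=
    (Real.summable_exp_nat_mul_iff.mpr hb).mul_left C
  refine Summable.of_nonneg_of_le (fun n => by positivity) (fun n => ?_) hg
  have := le_mR_sq n
  refine mul_le_mul (h n) (Real.exp_le_exp.mpr ?_) (Real.exp_pos _).le hC
  nlinarith

lemma Adm.mul_freq {a : ℕ → ℝ} (h : Adm a) : Adm (mm a) := by
  intro b hb
  have h2 := (h (b / 2) (by linarith)).mul_left (2 / (-b))
  refine Summable.of_nonneg_of_le (fun n => by positivity) (fun n => ?_) h2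
  have hm := mR_ge n
  have e1 : Real.exp (b * mR n ^ 2) =
      Real.exp (b / 2 * mR n ^ 2) * Real.exp (b / 2 * mR n ^ 2) := by
    rw [← Real.exp_add]; congr 1; ring
  -- `m e^{b m²/2} ≤ 2 / (-b)`
  have e2 : mR n * Real.exp (b / 2 * mR n ^ 2) ≤ 2 / (-b) := by
    have h3 : -b / 2 * mR n ^ 2 ≤ Real.exp (-(b / 2 * mR n ^ 2)) := by
      have := Real.add_one_le_exp (-(b / 2 * mR n ^ 2)); linarith
    have h4 : Real.exp (-(b / 2 * mR n ^ 2)) * Real.exp (b / 2 * mR n ^ 2) = 1 := by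
      rw [← Real.exp_add]; simp
    have h5 : -b / 2 * mR n ^ 2 * Real.exp (b / 2 * mR n ^ 2) ≤ 1 := by
      rw [← h4]; gcongr
    rw [le_div_iff₀ (by linarith)]
    have h6 : mR n ≤ mR n ^ 2 := by nlinarith
    have h7 : mR n * Real.exp (b / 2 * mR n ^ 2) ≤ mR n ^ 2 * Real.exp (b / 2 * mR n ^ 2) := by
      gcongr
    nlinarith
  have e3 : |mm a n| = mR n * |a n| := by
    rw [mm, abs_mul, abs_of_nonneg (by linarith)]
  rw [e3, e1]
  calc mR n * |a n| * (Real.exp (b / 2 * mR n ^ 2) * Real.exp (b / 2 * mR n ^ 2))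
      = (mR n * Real.exp (b / 2 * mR n ^ 2)) * (|a n| * Real.exp (b / 2 * mR n ^ 2)) := by ring
    _ ≤ _ := by gcongr

/-- The sine series `∑ aₙ exp (mₙ² s) sin (mₙ θ)`, a solution of the backward heat equation
`∂_s + ∂_θθ = 0` on `s < 0`. The variable `s` stands for `log r`. -/
noncomputable def Sn (a : ℕ → ℝ) (s θ : ℝ) : ℝ :=
  ∑' n, a n * (Real.exp (mR n ^ 2 * s) * Real.sin (mR n * θ))

/-- The cosine series `∑ aₙ exp (mₙ² s) cos (mₙ θ)`. -/
noncomputable def Cs (a : ℕ → ℝ) (s θ : ℝ) : ℝ :=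
  ∑' n, a n * (Real.exp (mR n ^ 2 * s) * Real.cos (mR n * θ))

lemma Adm.summable_of_le {a : ℕ → ℝ} (h : Adm a) {s : ℝ} (hs : s < 0) {f : ℕ → ℝ}
    (hf : ∀ n, |f n| ≤ 1) :
    Summable fun n => a n * (Real.exp (mR n ^ 2 * s) * f n) := by
  refine Summable.of_norm_bounded (h s hs) (fun n => ?_)
  rw [Real.norm_eq_abs, abs_mul, abs_mul, Real.abs_exp, mul_comm s]
  gcongr
  exact mul_le_of_le_one_right (Real.exp_pos _).le (hf n)

lemma Adm.summable_sin {a : ℕ → ℝ} (h : Adm a) {s : ℝ} (hs : s < 0) (θ : ℝ) :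
    Summable fun n => a n * (Real.exp (mR n ^ 2 * s) * Real.sin (mR n * θ)) :=
  h.summable_of_le hs fun _ => Real.abs_sin_le_one _

lemma Adm.summable_cos {a : ℕ → ℝ} (h : Adm a) {s : ℝ} (hs : s < 0) (θ : ℝ) :
    Summable fun n => a n * (Real.exp (mR n ^ 2 * s) * Real.cos (mR n * θ)) :=
  h.summable_of_le hs fun _ => Real.abs_cos_le_one _

/-- The `ℝ`-linear form `(s, θ) ↦ mₙ² s + i mₙ θ`. -/
noncomputable def Lm (n : ℕ) : ℝ × ℝ →L[ℝ] ℂ :=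
  (ContinuousLinearMap.fst ℝ ℝ ℝ).smulRight ((mR n ^ 2 : ℝ) : ℂ) +
    (ContinuousLinearMap.snd ℝ ℝ ℝ).smulRight ((mR n : ℂ) * Complex.I)

lemma Lm_apply (n : ℕ) (v : ℝ × ℝ) :
    Lm n v = ((mR n ^ 2 * v.1 : ℝ) : ℂ) + ((mR n * v.2 : ℝ) : ℂ) * Complex.I := by
  simp [Lm]; ring

lemma norm_Lm_le (n : ℕ) : ‖Lm n‖ ≤ 2 * mR n ^ 2 := by
  have hm := mR_ge n
  refine ContinuousLinearMap.opNorm_le_bound _ (by positivity) fun v => ?_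
  rw [Lm_apply]
  refine (norm_add_le _ _).trans ?_
  rw [norm_mul, Complex.norm_I, mul_one, Complex.norm_real, Complex.norm_real, norm_mul, norm_mul,
    Real.norm_of_nonneg (by positivity : 0 ≤ mR n ^ 2), Real.norm_of_nonneg (by linarith : 0 ≤ mR n)]
  have h1 := norm_fst_le v
  have h2 := norm_snd_le v
  have h3 : mR n ≤ mR n ^ 2 := by nlinarith
  calc mR n ^ 2 * ‖v.1‖ + mR n * ‖v.2‖ ≤ mR n ^ 2 * ‖v‖ + mR n ^ 2 * ‖v‖ := by gcongr
    _ = _ := by ring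

/-- The complex series `∑ aₙ exp (mₙ² s + i mₙ θ) = Cs + i Sn`. -/
noncomputable def Zs (a : ℕ → ℝ) (v : ℝ × ℝ) : ℂ := ∑' n, (a n : ℂ) * Complex.exp (Lm n v)

lemma term_eq (a : ℝ) (n : ℕ) (v : ℝ × ℝ) : (a : ℂ) * Complex.exp (Lm n v) =
    ((a * (Real.exp (mR n ^ 2 * v.1) * Real.cos (mR n * v.2)) : ℝ) : ℂ) +
      ((a * (Real.exp (mR n ^ 2 * v.1) * Real.sin (mR n * v.2)) : ℝ) : ℂ) * Complex.I := by
  rw [Lm_apply, Complex.exp_add, Complex.exp_mul_I]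
  push_cast
  ring

lemma Adm.Zs_eq {a : ℕ → ℝ} (h : Adm a) {v : ℝ × ℝ} (hv : v.1 < 0) :
    Zs a v = (Cs a v.1 v.2 : ℂ) + (Sn a v.1 v.2 : ℂ) * Complex.I := by
  have h1 := Complex.hasSum_ofReal.mpr (h.summable_cos hv v.2).hasSum
  have h2 := (Complex.hasSum_ofReal.mpr (h.summable_sin hv v.2).hasSum).mul_right Complex.I
  have h3 := h1.add h2
  unfold Zs
  simp_rw [term_eq]
  exact h3.tsum_eq

/-- The summability needed to apply the general results on exponential series with radius `-s/4`. -/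
lemma Adm.summable_exp {a : ℕ → ℝ} (h : Adm a) {v : ℝ × ℝ} (hv : v.1 < 0) :
    Summable fun n => ‖(a n : ℂ) * Complex.exp (Lm n v)‖ * Real.exp (-v.1 / 4 * ‖Lm n‖) := by
  refine Summable.of_nonneg_of_le (fun n => by positivity) (fun n => ?_)
    (h (v.1 / 2) (by linarith))
  rw [norm_mul, Complex.norm_real, Complex.norm_exp, mul_assoc, ← Real.exp_add, Real.norm_eq_abs]
  have h1 : (Lm n v).re = mR n ^ 2 * v.1 := by rw [Lm_apply]; simp [-Complex.ofReal_mul]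
  rw [h1]
  gcongr
  have := norm_Lm_le n
  nlinarith

lemma Adm.analyticAt_Zs {a : ℕ → ℝ} (h : Adm a) {v : ℝ × ℝ} (hv : v.1 < 0) :
    AnalyticAt ℝ (Zs a) v :=
  analyticAt_expSeries (fun n => (a n : ℂ)) Lm v (ρ := -v.1 / 4) (by linarith) (h.summable_exp hv)

lemma eventually_fst_neg {v : ℝ × ℝ} (hv : v.1 < 0) : ∀ᶠ z : ℝ × ℝ in 𝓝 v, z.1 < 0 :=
  continuous_fst.continuousAt.eventually (gt_mem_nhds hv)

lemma Adm.Sn_eventuallyEq {a : ℕ → ℝ} (h : Adm a) {v : ℝ × ℝ} (hv : v.1 < 0) :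
    (fun z => Complex.imCLM (Zs a z)) =ᶠ[𝓝 v] (fun z => Sn a z.1 z.2) := by
  filter_upwards [eventually_fst_neg hv] with z hz
  rw [h.Zs_eq hz]; simp

lemma Adm.Cs_eventuallyEq {a : ℕ → ℝ} (h : Adm a) {v : ℝ × ℝ} (hv : v.1 < 0) :
    (fun z => Complex.reCLM (Zs a z)) =ᶠ[𝓝 v] (fun z => Cs a z.1 z.2) := by
  filter_upwards [eventually_fst_neg hv] with z hz
  rw [h.Zs_eq hz]; simp

lemma Adm.analyticAt_Sn {a : ℕ → ℝ} (h : Adm a) {v : ℝ × ℝ} (hv : v.1 < 0) :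
    AnalyticAt ℝ (fun z : ℝ × ℝ => Sn a z.1 z.2) v :=
  ((Complex.imCLM.analyticAt _).comp (h.analyticAt_Zs hv)).congr (h.Sn_eventuallyEq hv)

lemma Adm.analyticAt_Cs {a : ℕ → ℝ} (h : Adm a) {v : ℝ × ℝ} (hv : v.1 < 0) :
    AnalyticAt ℝ (fun z : ℝ × ℝ => Cs a z.1 z.2) v :=
  ((Complex.reCLM.analyticAt _).comp (h.analyticAt_Zs hv)).congr (h.Cs_eventuallyEq hv)

lemma Adm.hasFDerivAt_Zs {a : ℕ → ℝ} (h : Adm a) {v : ℝ × ℝ} (hv : v.1 < 0) :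
    ∃ D : ℝ × ℝ →L[ℝ] ℂ, HasFDerivAt (Zs a) D v ∧
      ∀ u, D u = u.1 * Zs (mm (mm a)) v + u.2 * (Zs (mm a) v * Complex.I) := by
  obtain ⟨D, hD, hD2⟩ := hasFDerivAt_expSeries (fun n => (a n : ℂ)) Lm v (ρ := -v.1 / 4)
    (by linarith) (h.summable_exp hv)
  refine ⟨D, hD, fun u => ?_⟩
  have key : ∀ {b : ℕ → ℝ}, Adm b → Summable fun n => (b n : ℂ) * Complex.exp (Lm n v) := by
    intro b hb
    simp_rw [term_eq]
    exact (Complex.hasSum_ofReal.mpr (hb.summable_cos hv v.2).hasSum).summable.add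
      ((Complex.hasSum_ofReal.mpr (hb.summable_sin hv v.2).hasSum).summable.mul_right _)
  have h1 := ((key h.mul_freq.mul_freq).hasSum.mul_left (u.1 : ℂ)).add
    (((key h.mul_freq).hasSum.mul_right Complex.I).mul_left (u.2 : ℂ))
  rw [hD2]
  refine Eq.trans ?_ h1.tsum_eq
  congr 1; ext n
  rw [Lm_apply n u]
  simp only [mm]
  push_cast
  ring

lemma Adm.hasFDerivAt_Sn {a : ℕ → ℝ} (h : Adm a) {v : ℝ × ℝ} (hv : v.1 < 0) :
    HasFDerivAt (fun z : ℝ × ℝ => Sn a z.1 z.2)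
      (Sn (mm (mm a)) v.1 v.2 • ContinuousLinearMap.fst ℝ ℝ ℝ +
        Cs (mm a) v.1 v.2 • ContinuousLinearMap.snd ℝ ℝ ℝ) v := by
  obtain ⟨D, hD, hD2⟩ := h.hasFDerivAt_Zs hv
  have h1 := (Complex.imCLM.hasFDerivAt.comp v hD).congr_of_eventuallyEq
    (h.Sn_eventuallyEq hv).symm
  refine h1.congr_fderiv (ContinuousLinearMap.ext fun u => ?_)
  simp only [ContinuousLinearMap.comp_apply, hD2, h.mul_freq.mul_freq.Zs_eq hv, h.mul_freq.Zs_eq hv]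
  simp; ring

lemma Adm.hasFDerivAt_Cs {a : ℕ → ℝ} (h : Adm a) {v : ℝ × ℝ} (hv : v.1 < 0) :
    HasFDerivAt (fun z : ℝ × ℝ => Cs a z.1 z.2)
      (Cs (mm (mm a)) v.1 v.2 • ContinuousLinearMap.fst ℝ ℝ ℝ +
        (-Sn (mm a) v.1 v.2) • ContinuousLinearMap.snd ℝ ℝ ℝ) v := by
  obtain ⟨D, hD, hD2⟩ := h.hasFDerivAt_Zs hv
  have h1 := (Complex.reCLM.hasFDerivAt.comp v hD).congr_of_eventuallyEq
    (h.Cs_eventuallyEq hv).symm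
  refine h1.congr_fderiv (ContinuousLinearMap.ext fun u => ?_)
  simp only [ContinuousLinearMap.comp_apply, hD2, h.mul_freq.mul_freq.Zs_eq hv, h.mul_freq.Zs_eq hv]
  simp; ring

lemma hasDerivAt_fst_curve (s θ : ℝ) : HasDerivAt (fun t : ℝ => (t, θ)) ((1 : ℝ), (0 : ℝ)) s :=
  (hasDerivAt_id s).prodMk (hasDerivAt_const s θ)

lemma hasDerivAt_snd_curve (s θ : ℝ) : HasDerivAt (fun t : ℝ => (s, t)) ((0 : ℝ), (1 : ℝ)) θ :=
  (hasDerivAt_const θ s).prodMk (hasDerivAt_id θ)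

lemma Adm.hasDerivAt_Sn_fst {a : ℕ → ℝ} (h : Adm a) {s : ℝ} (hs : s < 0) (θ : ℝ) :
    HasDerivAt (fun t => Sn a t θ) (Sn (mm (mm a)) s θ) s := by
  have := HasFDerivAt.comp_hasDerivAt (f := fun t : ℝ => (t, θ)) s
    (h.hasFDerivAt_Sn (v := (s, θ)) hs) (hasDerivAt_fst_curve s θ)
  simpa [Function.comp_def] using this

lemma Adm.hasDerivAt_Sn_snd {a : ℕ → ℝ} (h : Adm a) {s : ℝ} (hs : s < 0) (θ : ℝ) :
    HasDerivAt (fun t => Sn a s t) (Cs (mm a) s θ) θ := by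
  have := HasFDerivAt.comp_hasDerivAt (f := fun t : ℝ => (s, t)) θ
    (h.hasFDerivAt_Sn (v := (s, θ)) hs) (hasDerivAt_snd_curve s θ)
  simpa [Function.comp_def] using this

lemma Adm.hasDerivAt_Cs_snd {a : ℕ → ℝ} (h : Adm a) {s : ℝ} (hs : s < 0) (θ : ℝ) :
    HasDerivAt (fun t => Cs a s t) (-Sn (mm a) s θ) θ := by
  have := HasFDerivAt.comp_hasDerivAt (f := fun t : ℝ => (s, t)) θ
    (h.hasFDerivAt_Cs (v := (s, θ)) hs) (hasDerivAt_snd_curve s θ)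
  simpa [Function.comp_def] using this

/-! ### The Jacobi triple product and monotonicity of the theta function -/

section theta
set_option linter.unusedSectionVars false
variable (x : ℝ)

/-- The `q`-Pochhammer symbol `(q; q)_j = ∏_{k=1}^{j} (1 - q^k)` with `q = x²`. -/
noncomputable def qE (x : ℝ) (j : ℕ) : ℝ := ∏ k ∈ Finset.range j, (1 - (x ^ 2) ^ (k + 1))

/-- The shifted reciprocal `1 / (q; q)_{j-1}`, equal to `0` for `j = 0`. With this convention the
recursion `qF_rec` holds for all `j` without a case distinction. -/
noncomputable def qF (x : ℝ) : ℕ → ℝ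
  | 0 => 0
  | j + 1 => (qE x j)⁻¹

/-- The normalised `q`-binomial coefficient
`(q; q)_N (q; q)_{2N+1} / ((q; q)_{N-n} (q; q)_{N+n+1})`, which vanishes for `n > N`: there the
truncated difference `N + 1 - n` is `0` and `qF` is `0`. -/
noncomputable def qD (x : ℝ) (N n : ℕ) : ℝ :=
  qE x N * qE x (2 * N + 1) * (qF x (N + 1 - n) * qF x (N + n + 2))

/-- The partial product `cos z ∏_{k=1}^{N} (1 - q^k)(1 + 2 q^k cos 2z + q^{2k})`, `q = x²`. -/
noncomputable def thetaProd (x : ℝ) (N : ℕ) (z : ℝ) : ℝ :=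
  Real.cos z * ∏ k ∈ Finset.range N, ((1 - (x ^ 2) ^ (k + 1)) *
    (1 + 2 * (x ^ 2) ^ (k + 1) * Real.cos (2 * z) + ((x ^ 2) ^ (k + 1)) ^ 2))

/-- The theta series `∑ x^{n(n+1)} cos ((2n+1) z)`, i.e. Jacobi `θ₂` with nome `x`, up to the factor
`2 x^{1/4}`. -/
noncomputable def theta (x z : ℝ) : ℝ :=
  ∑' n : ℕ, x ^ (n * (n + 1)) * Real.cos ((2 * n + 1) * z)

variable {x} (hx0 : 0 < x) (hx1 : x < 1)
include hx0 hx1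

lemma q_pow_pos (k : ℕ) : 0 < (x ^ 2) ^ k := by positivity

lemma q_pow_lt_one (k : ℕ) : (x ^ 2) ^ (k + 1) < 1 :=
  pow_lt_one₀ (by positivity) (pow_lt_one₀ hx0.le hx1 two_ne_zero) (Nat.succ_ne_zero k)

lemma qE_pos (j : ℕ) : 0 < qE x j :=
  Finset.prod_pos fun k _ => by linarith [q_pow_lt_one hx0 hx1 k]

lemma qE_succ (j : ℕ) : qE x (j + 1) = qE x j * (1 - (x ^ 2) ^ (j + 1)) :=
  Finset.prod_range_succ _ _

lemma qE_antitone : Antitone (qE x) := by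
  refine antitone_nat_of_succ_le fun j => ?_
  rw [qE_succ hx0 hx1]
  exact mul_le_of_le_one_right (qE_pos hx0 hx1 j).le (by linarith [q_pow_pos hx0 hx1 (j + 1)])

lemma qF_rec (j : ℕ) : qF x j = (1 - (x ^ 2) ^ j) * qF x (j + 1) := by
  cases j with
  | zero => simp [qF]
  | succ j =>
    have h1 := qE_pos hx0 hx1 j
    have h2 : 0 < 1 - (x ^ 2) ^ (j + 1) := by linarith [q_pow_lt_one hx0 hx1 j]
    simp only [qF]
    rw [qE_succ hx0 hx1]
    field_simp

lemma qF_nonneg (j : ℕ) : 0 ≤ qF x j := by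
  cases j with
  | zero => simp [qF]
  | succ j => exact (inv_pos.mpr (qE_pos hx0 hx1 j)).le

lemma qE_step (N : ℕ) : qE x (N + 1) * qE x (2 * (N + 1) + 1) = qE x N * qE x (2 * N + 1) *
    ((1 - (x ^ 2) ^ (N + 1)) * (1 - (x ^ 2) ^ (2 * N + 2)) * (1 - (x ^ 2) ^ (2 * N + 3))) := by
  rw [show 2 * (N + 1) + 1 = 2 * N + 1 + 1 + 1 by ring, qE_succ hx0 hx1 N,
    qE_succ hx0 hx1 (2 * N + 1 + 1), qE_succ hx0 hx1 (2 * N + 1)]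
  ring

/-- The recursion for the constant coefficient when a factor
`(1 - q^{N+1})(1 + 2 q^{N+1} cos 2z + q^{2N+2})` is added to the product. -/
lemma qD_rec_zero (N : ℕ) : qD x (N + 1) 0 = (1 - (x ^ 2) ^ (N + 1)) *
    ((1 + ((x ^ 2) ^ (N + 1)) ^ 2) * qD x N 0 +
      (x ^ 2) ^ (N + 1) * (qD x N 0 + x ^ 2 * qD x N 1)) := by
  unfold qD
  rw [qE_step hx0 hx1]
  simp only [Nat.sub_zero, Nat.add_sub_cancel, add_zero]
  rw [show N + 1 + 2 = N + 3 by ring, show N + 1 + 1 = N + 2 by ring]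
  have e0 := qF_rec hx0 hx1 N
  have e1 := qF_rec hx0 hx1 (N + 1)
  have e2 := qF_rec hx0 hx1 (N + 2)
  rw [e0, e1, e2]
  ring

/-- The analogous recursion for the higher coefficients. -/
lemma qD_rec_succ (N n : ℕ) (hn : n ≤ N) : (x ^ 2) ^ (n + 1) * qD x (N + 1) (n + 1) =
    (1 - (x ^ 2) ^ (N + 1)) *
    ((1 + ((x ^ 2) ^ (N + 1)) ^ 2) * ((x ^ 2) ^ (n + 1) * qD x N (n + 1)) +
      (x ^ 2) ^ (N + 1) * (qD x N n + (x ^ 2) ^ (n + 1) * ((x ^ 2) ^ (n + 2) * qD x N (n + 2)))) := by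
  unfold qD
  rw [qE_step hx0 hx1]
  obtain ⟨i, rfl⟩ := Nat.exists_eq_add_of_le hn
  rw [show n + i + 1 + 1 - (n + 1) = i + 1 by omega, show n + i + 1 + (n + 1) + 2 = 2 * n + i + 4 by ring,
    show n + i + 1 - (n + 1) = i by omega, show n + i + (n + 1) + 2 = 2 * n + i + 3 by ring,
    show n + i + 1 - n = i + 1 by omega, show n + i + n + 2 = 2 * n + i + 2 by ring,
    show n + i + (n + 2) + 2 = 2 * n + i + 4 by ring]
  have e2 := qF_rec hx0 hx1 (2 * n + i + 2)
  have e3 := qF_rec hx0 hx1 (2 * n + i + 3)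
  have e0 := qF_rec hx0 hx1 i
  rw [e2, e3, e0]
  rcases i with _ | i
  · rw [show n + 0 + 1 - (n + 2) = 0 by omega]
    simp only [qF]
    ring
  · rw [show n + (i + 1) + 1 - (n + 2) = i by omega]
    have e1 := qF_rec hx0 hx1 i
    have e4 := qF_rec hx0 hx1 (i + 1)
    rw [e1, e4]
    ring

lemma qD_eq_zero {N n : ℕ} (h : N < n) : qD x N n = 0 := by
  rw [qD, show N + 1 - n = 0 by omega]
  simp [qF]

lemma qD_nonneg (N n : ℕ) : 0 ≤ qD x N n :=
  mul_nonneg (mul_nonneg (qE_pos hx0 hx1 _).le (qE_pos hx0 hx1 _).le)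
    (mul_nonneg (qF_nonneg hx0 hx1 _) (qF_nonneg hx0 hx1 _))

lemma qD_eq {N n : ℕ} (h : n ≤ N) :
    qD x N n = qE x N * qE x (2 * N + 1) / (qE x (N - n) * qE x (N + n + 1)) := by
  rw [qD, show N + 1 - n = N - n + 1 by omega]
  simp only [qF]
  field_simp

lemma qD_le_one (N n : ℕ) : qD x N n ≤ 1 := by
  rcases lt_or_ge N n with h | h
  · rw [qD_eq_zero hx0 hx1 h]; exact zero_le_one
  · rw [qD_eq hx0 hx1 h]
    have h1 := qE_pos hx0 hx1 (N - n)
    have h2 := qE_pos hx0 hx1 (N + n + 1)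
    refine div_le_one_of_le₀ ?_ (by positivity)
    exact mul_le_mul (qE_antitone hx0 hx1 (by omega)) (qE_antitone hx0 hx1 (by omega))
      (qE_pos hx0 hx1 _).le h1.le

lemma exists_qE_lim : ∃ l, 0 < l ∧ Tendsto (qE x) atTop (𝓝 l) := by
  have hs : Summable fun k : ℕ => ‖-(x ^ 2) ^ (k + 1)‖ := by
    simp_rw [norm_neg, norm_pow]
    have : Summable fun k : ℕ => (‖x‖ ^ 2) ^ k :=
      summable_geometric_of_lt_one (by positivity)
        (pow_lt_one₀ (by positivity) (by rwa [Real.norm_of_nonneg hx0.le]) two_ne_zero)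
    exact (summable_nat_add_iff 1).mpr this
  have h0 : ∏' k : ℕ, (1 + -(x ^ 2) ^ (k + 1)) ≠ 0 :=
    tprod_one_add_ne_zero_of_summable
      (fun k => by have := q_pow_lt_one hx0 hx1 k; linarith) hs
  have h1 : Tendsto (qE x) atTop (𝓝 (∏' k : ℕ, (1 + -(x ^ 2) ^ (k + 1)))) := by
    have := (multipliable_one_add_of_summable hs).hasProd.tendsto_prod_nat
    refine this.congr fun N => ?_
    simp only [qE, ← sub_eq_add_neg]
  refine ⟨_, lt_of_le_of_ne ?_ h0.symm, h1⟩
  exact ge_of_tendsto' h1 fun j => (qE_pos hx0 hx1 j).le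

lemma tendsto_qD (n : ℕ) : Tendsto (fun N => qD x N n) atTop (𝓝 1) := by
  obtain ⟨l, hl, hE⟩ := exists_qE_lim hx0 hx1
  have h1 : Tendsto (fun N : ℕ => 2 * N + 1) atTop atTop :=
    tendsto_atTop_mono (fun N => by simp only [id]; omega) tendsto_id
  have h2 : Tendsto (fun N : ℕ => N - n) atTop atTop := tendsto_sub_atTop_nat n
  have h3 : Tendsto (fun N : ℕ => N + n + 1) atTop atTop :=
    tendsto_atTop_mono (fun N => by simp only [id]; omega) tendsto_id
  have h4 := (hE.mul (hE.comp h1)).div ((hE.comp h2).mul (hE.comp h3)) (by positivity)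
  rw [div_self (by positivity)] at h4
  refine h4.congr' ?_
  filter_upwards [eventually_ge_atTop n] with N hN
  rw [qD_eq hx0 hx1 hN]; rfl

/-- A finite form of the Jacobi triple product identity, by induction on `N` using the
`q`-Pascal-type recursions `qD_rec_zero` and `qD_rec_succ`. -/
lemma thetaProd_eq (N : ℕ) (z : ℝ) : thetaProd x N z =
    ∑ n ∈ Finset.range (N + 1), qD x N n * x ^ (n * (n + 1)) * Real.cos ((2 * n + 1) * z) := by
  induction N with
  | zero =>
    have := qE_pos hx0 hx1 1
    have h0 := qE_pos hx0 hx1 0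
    simp [thetaProd, qD_eq hx0 hx1 le_rfl]
    field_simp
  | succ N ih =>
    set a : ℕ → ℝ := fun n => qD x N n * x ^ (n * (n + 1)) with ha
    set c : ℕ → ℝ := fun n => Real.cos ((2 * n + 1) * z) with hc
    set p := (x ^ 2) ^ (N + 1) with hp
    have hz : ∀ n, N < n → a n = 0 := fun n hn => by simp [ha, qD_eq_zero hx0 hx1 hn]
    have hc0 : 2 * Real.cos (2 * z) * c 0 = c 0 + c 1 := by
      have e : c 1 = Real.cos (2 * z + z) := by simp only [hc]; congr 1; push_cast; ring
      have e0 : c 0 = Real.cos z := by simp [hc]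
      have e' : c 0 = Real.cos (2 * z - z) := by rw [e0]; congr 1; ring
      rw [Real.cos_add] at e
      rw [Real.cos_sub] at e'
      rw [e0] at e' ⊢
      linarith
    have hcs : ∀ n, 2 * Real.cos (2 * z) * c (n + 1) = c n + c (n + 2) := fun n => by
      have e : c (n + 2) = Real.cos ((2 * (n + 1 : ℕ) + 1) * z + 2 * z) := by
        simp only [hc]; congr 1; push_cast; ring
      have e' : c n = Real.cos ((2 * (n + 1 : ℕ) + 1) * z - 2 * z) := by
        simp only [hc]; congr 1; push_cast; ring
      rw [e, e', Real.cos_add, Real.cos_sub]; simp only [hc]; ring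
    have hsucc : thetaProd x (N + 1) z =
        (1 - p) * (1 + 2 * p * Real.cos (2 * z) + p ^ 2) * thetaProd x N z := by
      simp only [thetaProd, Finset.prod_range_succ, hp]; ring
    have hb0 : qD x (N + 1) 0 * x ^ (0 * (0 + 1)) =
        (1 - p) * ((1 + p ^ 2) * a 0 + p * (a 0 + a 1)) := by
      simp only [ha]; rw [qD_rec_zero hx0 hx1]; simp; ring
    have hbs : ∀ n ∈ Finset.range (N + 1), qD x (N + 1) (n + 1) * x ^ ((n + 1) * (n + 1 + 1)) =
        (1 - p) * ((1 + p ^ 2) * a (n + 1) + p * (a n + a (n + 2))) := fun n hn => by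
      have h := qD_rec_succ hx0 hx1 N n (by simpa [Nat.lt_succ_iff] using hn)
      simp only [ha]
      have e1 : x ^ ((n + 1) * (n + 1 + 1)) = x ^ (n * (n + 1)) * (x ^ 2) ^ (n + 1) := by
        rw [← pow_mul, ← pow_add]; congr 1; ring
      have e2 : x ^ ((n + 2) * (n + 2 + 1)) =
          x ^ (n * (n + 1)) * (x ^ 2) ^ (n + 1) * (x ^ 2) ^ (n + 2) := by
        rw [← pow_mul, ← pow_mul, ← pow_add, ← pow_add]; congr 1; ring
      rw [e1, e2]
      linear_combination x ^ (n * (n + 1)) * h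
    have shift : ∀ f : ℕ → ℝ, f (N + 1) = 0 →
        ∑ n ∈ Finset.range (N + 1), f (n + 1) = ∑ n ∈ Finset.range (N + 1), f n - f 0 := fun f hf => by
      have h1 := Finset.sum_range_succ' f (N + 1)
      have h2 := Finset.sum_range_succ f (N + 1)
      linarith
    have s1 := shift (fun n => a n * c n) (by simp [hz (N + 1)])
    have s2 := shift (fun n => a n * c (n + 1)) (by simp [hz (N + 1)])
    have s3 := shift (fun n => a (n + 1) * c n) (by simp [hz (N + 1 + 1) (by omega)])
    have s4 : 2 * Real.cos (2 * z) * ∑ n ∈ Finset.range (N + 1), a (n + 1) * c (n + 1) =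
        ∑ n ∈ Finset.range (N + 1), a (n + 1) * c n +
          ∑ n ∈ Finset.range (N + 1), a (n + 1) * c (n + 2) := by
      rw [Finset.mul_sum, ← Finset.sum_add_distrib]
      refine Finset.sum_congr rfl fun n _ => ?_
      linear_combination a (n + 1) * hcs n
    have s5 : ∑ n ∈ Finset.range (N + 1),
          (1 - p) * ((1 + p ^ 2) * a (n + 1) + p * (a n + a (n + 2))) * c (n + 1) =
        (1 - p) * ((1 + p ^ 2) * ∑ n ∈ Finset.range (N + 1), a (n + 1) * c (n + 1) +
          p * (∑ n ∈ Finset.range (N + 1), a n * c (n + 1) +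
            ∑ n ∈ Finset.range (N + 1), a (n + 2) * c (n + 1))) := by
      simp only [Finset.mul_sum, ← Finset.sum_add_distrib]
      refine Finset.sum_congr rfl fun n _ => ?_
      ring
    have ih' : thetaProd x N z = ∑ n ∈ Finset.range (N + 1), a n * c n := ih
    have goal' : ∑ n ∈ Finset.range (N + 1 + 1),
          qD x (N + 1) n * x ^ (n * (n + 1)) * Real.cos ((2 * n + 1) * z) =
        ∑ n ∈ Finset.range (N + 1),
          (1 - p) * ((1 + p ^ 2) * a (n + 1) + p * (a n + a (n + 2))) * c (n + 1) +
        (1 - p) * ((1 + p ^ 2) * a 0 + p * (a 0 + a 1)) * c 0 := by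
      rw [Finset.sum_range_succ', ← hb0]
      congr 1
      exact Finset.sum_congr rfl fun n hn => by rw [← hbs n hn]
    simp only [zero_add] at s1 s2 s3
    have s2' : ∑ n ∈ Finset.range (N + 1), a (n + 1) * c (n + 2) =
        ∑ n ∈ Finset.range (N + 1), a n * c (n + 1) - a 0 * c 1 := s2
    have s3' : ∑ n ∈ Finset.range (N + 1), a (n + 2) * c (n + 1) =
        ∑ n ∈ Finset.range (N + 1), a (n + 1) * c n - a 1 * c 0 := s3
    rw [goal', s5, hsucc, ih', s3']
    rw [s1, s2'] at s4
    rw [s1]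
    linear_combination (1 - p) * p * s4 + (1 - p) * p * a 0 * hc0

lemma summable_theta_bound : Summable fun n : ℕ => x ^ (n * (n + 1)) := by
  refine Summable.of_nonneg_of_le (fun n => by positivity) (fun n => ?_)
    (summable_geometric_of_lt_one hx0.le hx1)
  exact pow_le_pow_of_le_one hx0.le hx1.le (Nat.le_mul_of_pos_right n (Nat.succ_pos n))

/-- The Jacobi triple product, obtained from the finite identity by dominated convergence. -/
lemma tendsto_thetaProd (z : ℝ) : Tendsto (fun N => thetaProd x N z) atTop (𝓝 (theta x z)) := by
  have h1 : ∀ N, thetaProd x N z =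
      ∑' n : ℕ, qD x N n * x ^ (n * (n + 1)) * Real.cos ((2 * n + 1) * z) := fun N => by
    rw [thetaProd_eq hx0 hx1, tsum_eq_sum]
    intro n hn
    rw [qD_eq_zero hx0 hx1 (by simpa using hn)]; simp
  simp_rw [h1]
  refine tendsto_tsum_of_dominated_convergence (summable_theta_bound hx0 hx1) (fun n => ?_)
    (Eventually.of_forall fun N n => ?_)
  · have := ((tendsto_qD hx0 hx1 n).mul_const (x ^ (n * (n + 1)))).mul_const
      (Real.cos ((2 * n + 1) * z))
    simpa using this
  · rw [Real.norm_eq_abs, abs_mul, abs_mul, abs_of_nonneg (qD_nonneg hx0 hx1 N n),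
      abs_of_nonneg (by positivity : 0 ≤ x ^ (n * (n + 1)))]
    have h2 := Real.abs_cos_le_one ((2 * n + 1) * z)
    have h3 := qD_le_one hx0 hx1 N n
    have h4 := qD_nonneg hx0 hx1 N n
    have h5 : 0 ≤ x ^ (n * (n + 1)) := by positivity
    calc qD x N n * x ^ (n * (n + 1)) * |Real.cos ((2 * n + 1) * z)|
        ≤ 1 * x ^ (n * (n + 1)) * 1 := by gcongr
      _ = _ := by ring

lemma theta_factor_ge (k : ℕ) (z : ℝ) : (1 - (x ^ 2) ^ (k + 1)) ^ 3 ≤ (1 - (x ^ 2) ^ (k + 1)) *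
    (1 + 2 * (x ^ 2) ^ (k + 1) * Real.cos (2 * z) + ((x ^ 2) ^ (k + 1)) ^ 2) := by
  have h1 := q_pow_lt_one hx0 hx1 k
  have h2 := q_pow_pos hx0 hx1 (k + 1)
  have h3 := Real.neg_one_le_cos (2 * z)
  rw [pow_succ']
  gcongr
  nlinarith

lemma theta_factor_nonneg (k : ℕ) (z : ℝ) : 0 ≤ (1 - (x ^ 2) ^ (k + 1)) *
    (1 + 2 * (x ^ 2) ^ (k + 1) * Real.cos (2 * z) + ((x ^ 2) ^ (k + 1)) ^ 2) :=
  le_trans (pow_nonneg (by linarith [q_pow_lt_one hx0 hx1 k]) 3) (theta_factor_ge hx0 hx1 k z)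

/-- On `[0, π/2]` every factor of the partial products is nonnegative and nonincreasing in `z`. -/
lemma theta_antitoneOn : AntitoneOn (theta x) (Icc 0 (π / 2)) := by
  intro z hz z' hz' hzz
  refine le_of_tendsto_of_tendsto' (tendsto_thetaProd hx0 hx1 z') (tendsto_thetaProd hx0 hx1 z)
    fun N => ?_
  unfold thetaProd
  refine mul_le_mul (Real.cos_le_cos_of_nonneg_of_le_pi hz.1 (by linarith [hz'.2, Real.pi_pos]) hzz)
    (Finset.prod_le_prod (fun k _ => theta_factor_nonneg hx0 hx1 k z') fun k _ => ?_)
    (Finset.prod_nonneg fun k _ => theta_factor_nonneg hx0 hx1 k z')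
    (Real.cos_nonneg_of_mem_Icc ⟨by linarith [hz.1, Real.pi_pos], hz.2⟩)
  have h1 := q_pow_lt_one hx0 hx1 k
  have h2 := q_pow_pos hx0 hx1 (k + 1)
  have h3 : Real.cos (2 * z') ≤ Real.cos (2 * z) :=
    Real.cos_le_cos_of_nonneg_of_le_pi (by linarith [hz.1]) (by linarith [hz'.2]) (by linarith)
  gcongr

/-- Each factor is at least `(1 - q^k)³`, so the product is bounded below by `cos z ∏ (1 - q^k)³ > 0`. -/
lemma theta_pos {z : ℝ} (hz : z ∈ Ico 0 (π / 2)) : 0 < theta x z := by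
  obtain ⟨l, hl, hE⟩ := exists_qE_lim hx0 hx1
  have hcos : 0 < Real.cos z :=
    Real.cos_pos_of_mem_Ioo ⟨by linarith [hz.1, Real.pi_pos], hz.2⟩
  have h1 : Tendsto (fun N => Real.cos z * qE x N ^ 3) atTop (𝓝 (Real.cos z * l ^ 3)) :=
    (hE.pow 3).const_mul _
  have h2 : Real.cos z * l ^ 3 ≤ theta x z := by
    refine le_of_tendsto_of_tendsto' h1 (tendsto_thetaProd hx0 hx1 z) fun N => ?_
    unfold thetaProd qE
    rw [← Finset.prod_pow]
    gcongr with k _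
    · intro k _; exact pow_nonneg (by linarith [q_pow_lt_one hx0 hx1 k]) 3
    · exact theta_factor_ge hx0 hx1 k z
  exact lt_of_lt_of_le (by positivity) h2
end theta

lemma theta_reflect (x z : ℝ) : theta x (π - z) = -theta x z := by
  unfold theta
  rw [← tsum_neg]
  congr 1; ext n
  have : (2 * (n : ℝ) + 1) * (π - z) = (π - (2 * n + 1) * z) + (n : ℝ) * (2 * π) := by ring
  rw [this, Real.cos_add_nat_mul_two_pi, Real.cos_pi_sub]
  ring

lemma theta_antitoneOn_pi {x : ℝ} (hx0 : 0 < x) (hx1 : x < 1) :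
    AntitoneOn (theta x) (Icc 0 π) := by
  have h := theta_antitoneOn hx0 hx1
  have hpi := Real.pi_pos
  have hr : AntitoneOn (theta x) (Icc (π / 2) π) := by
    intro z hz z' hz' hzz
    have := h (a := π - z') ⟨by linarith [hz'.2], by linarith [hz'.1]⟩ (b := π - z)
      ⟨by linarith [hz.2], by linarith [hz.1]⟩ (by linarith)
    rw [theta_reflect, theta_reflect] at this
    linarith
  have := h.union_right hr ⟨right_mem_Icc.mpr (by linarith), fun y hy => hy.2⟩
    ⟨left_mem_Icc.mpr (by linarith), fun y hy => hy.1⟩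
  rwa [Icc_union_Icc_eq_Icc (by linarith) (by linarith)] at this

lemma theta_ne_zero {x : ℝ} (hx0 : 0 < x) (hx1 : x < 1) {z : ℝ} (hz : z ∈ Ioo 0 π)
    (hne : z ≠ π / 2) : theta x z ≠ 0 := by
  rcases lt_or_gt_of_ne hne with h | h
  · exact (theta_pos hx0 hx1 ⟨hz.1.le, h⟩).ne'
  · have := theta_pos hx0 hx1 (z := π - z) ⟨by linarith [hz.2], by linarith⟩
    rw [theta_reflect] at this
    intro h0; rw [h0] at this; simp at this

/-! ### The gradient map in logarithmic polar coordinates -/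

/-- The coefficients of the sine series of `W`. -/
noncomputable def cV (n : ℕ) : ℝ := 8 / π / ((mR n ^ 2 - 1) * mR n)

lemma adm_cV : Adm cV := by
  refine adm_of_bdd (C := 8 / π) fun n => ?_
  have hm := mR_ge n
  have h1 : 1 ≤ (mR n ^ 2 - 1) * mR n := by nlinarith
  have h2 : 0 < 8 / π := by positivity
  rw [cV, abs_of_nonneg (by positivity)]
  exact div_le_self h2.le h1

/-- The coefficients of `W` are chosen so that `V_sθ - V_θ` has constant coefficients, where
`V (s, θ) = W (exp s) θ`. -/
lemma mm_cV_sub (n : ℕ) : mm (mm (mm cV)) n - mm cV n = 8 / π := by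
  have hm := mR_ge n
  have h1 : mR n ^ 2 - 1 ≠ 0 := by nlinarith
  have h2 : mR n ≠ 0 := by linarith
  simp only [mm, cV]
  field_simp

/-- In logarithmic polar coordinates `W` is a sine series. -/
lemma W_eq {r : ℝ} (hr : 0 < r) (θ : ℝ) : W r θ = Sn cV (Real.log r) θ := by
  unfold W Sn
  rw [← tsum_mul_left]
  congr 1; ext n
  have h : Real.exp (mR n ^ 2 * Real.log r) = r ^ (mIdx n ^ 2) := by
    have : mR n ^ 2 * Real.log r = ((mIdx n ^ 2 : ℕ) : ℝ) * Real.log r := by simp [mR]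
    rw [this, Real.exp_nat_mul, Real.exp_log hr]
  rw [h]
  simp only [cV, mR]
  ring

lemma W_exp (s θ : ℝ) : W (Real.exp s) θ = Sn cV s θ := by
  rw [W_eq (Real.exp_pos s), Real.log_exp]

/-- The derivative in `s` of `V (s, θ) = W (exp s) θ`. -/
noncomputable def Vs (s θ : ℝ) : ℝ := Sn (mm (mm cV)) s θ
/-- The derivative in `θ` of `V (s, θ) = W (exp s) θ`. -/
noncomputable def Vt (s θ : ℝ) : ℝ := Cs (mm cV) s θ
/-- The combination `V_sθ - V_θ`, whose vanishing governs the degeneracy of the Hessian of `w`. -/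
noncomputable def Tm (s θ : ℝ) : ℝ := Cs (mm (mm (mm cV))) s θ - Cs (mm cV) s θ

/-- `V_sθ - V_θ` is a positive multiple of a theta function in the variable `2θ`. -/
lemma Tm_eq {s : ℝ} (hs : s < 0) (θ : ℝ) :
    Tm s θ = 8 / π * Real.exp (4 * s) * theta (Real.exp (16 * s)) (2 * θ) := by
  unfold Tm Cs theta
  rw [← (adm_cV.mul_freq.mul_freq.mul_freq.summable_cos hs θ).tsum_sub (adm_cV.mul_freq.summable_cos hs θ),
    ← tsum_mul_left]
  congr 1; ext n
  rw [← sub_mul, mm_cV_sub]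
  have h1 : Real.exp (mR n ^ 2 * s) = Real.exp (4 * s) * Real.exp (16 * s) ^ (n * (n + 1)) := by
    rw [← Real.exp_nat_mul, ← Real.exp_add]
    congr 1
    simp only [mR, mIdx]; push_cast; ring
  have h2 : mR n * θ = (2 * n + 1) * (2 * θ) := by
    simp only [mR, mIdx]; push_cast; ring
  rw [h1, h2]; ring

lemma Tm_ne_zero {s θ : ℝ} (hs : s < 0) (hθ : θ ∈ Ioo 0 (π / 2)) (hne : θ ≠ π / 4) :
    Tm s θ ≠ 0 := by
  rw [Tm_eq hs]
  have := theta_ne_zero (Real.exp_pos (16 * s)) (Real.exp_lt_one_iff.mpr (by linarith)) (z := 2 * θ)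
    ⟨by linarith [hθ.1], by linarith [hθ.2]⟩ (fun h => hne (by linarith))
  have h2 : 0 < 8 / π * Real.exp (4 * s) := by positivity
  exact mul_ne_zero h2.ne' this

/-- By the heat equation, `V_ss - V_s` is minus the `θ`-derivative of `V_sθ - V_θ`, which is
nonincreasing in `θ`. -/
lemma Vss_sub_nonneg {s θ : ℝ} (hs : s < 0) (hθ : θ ∈ Ioo 0 (π / 2)) :
    0 ≤ Sn (mm (mm (mm (mm cV)))) s θ - Sn (mm (mm cV)) s θ := by
  have hanti : AntitoneOn (fun t => Tm s t) (Icc 0 (π / 2)) := by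
    intro t ht t' ht' htt
    simp only [Tm_eq hs]
    have := theta_antitoneOn_pi (Real.exp_pos (16 * s)) (Real.exp_lt_one_iff.mpr (by linarith))
      (a := 2 * t) ⟨by linarith [ht.1], by linarith [ht.2]⟩ (b := 2 * t')
      ⟨by linarith [ht'.1], by linarith [ht'.2]⟩ (by linarith)
    gcongr
  have hd : HasDerivAt (fun t => Tm s t)
      (-Sn (mm (mm (mm (mm cV)))) s θ - -Sn (mm (mm cV)) s θ) θ :=
    (adm_cV.mul_freq.mul_freq.mul_freq.hasDerivAt_Cs_snd hs θ).sub
      (adm_cV.mul_freq.hasDerivAt_Cs_snd hs θ)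
  have h1 := hanti.derivWithin_nonpos (x := θ)
  rw [derivWithin_of_mem_nhds (Icc_mem_nhds hθ.1 hθ.2), hd.deriv] at h1
  linarith

/-- Logarithmic polar coordinates `(s, θ) ↦ (exp s cos θ, exp s sin θ)`. -/
noncomputable def psi (z : ℝ × ℝ) : ℝ × ℝ :=
  (Real.exp z.1 * Real.cos z.2, Real.exp z.1 * Real.sin z.2)

/-- The gradient map `∇w` in logarithmic polar coordinates (see `gradw_psi`). -/
noncomputable def Gmap (z : ℝ × ℝ) : ℝ × ℝ :=
  (Real.exp (-z.1) * (Real.cos z.2 * Vs z.1 z.2 - Real.sin z.2 * Vt z.1 z.2),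
    Real.exp (-z.1) * (Real.sin z.2 * Vs z.1 z.2 + Real.cos z.2 * Vt z.1 z.2))

lemma psi_sq (z : ℝ × ℝ) : (psi z).1 ^ 2 + (psi z).2 ^ 2 = Real.exp z.1 ^ 2 := by
  simp only [psi]
  linear_combination Real.exp z.1 ^ 2 * Real.cos_sq_add_sin_sq z.2

lemma psi_mem {z : ℝ × ℝ} (h1 : z.1 < 0) (h2 : z.2 ∈ Ioo 0 (π / 2)) : psi z ∈ B1 := by
  refine ⟨mul_pos (Real.exp_pos _) (Real.cos_pos_of_mem_Ioo ⟨by linarith [h2.1, Real.pi_pos], h2.2⟩),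
    mul_pos (Real.exp_pos _) (Real.sin_pos_of_pos_of_lt_pi h2.1 (by linarith [h2.2, Real.pi_pos])),
    ?_⟩
  rw [psi_sq]
  exact pow_lt_one₀ (Real.exp_pos _).le (Real.exp_lt_one_iff.mpr h1) two_ne_zero

/-- Every point of the open sector has logarithmic polar coordinates. -/
lemma exists_psi {p : ℝ × ℝ} (hp : p ∈ B1) :
    ∃ z : ℝ × ℝ, z.1 < 0 ∧ z.2 ∈ Ioo 0 (π / 2) ∧ psi z = p := by
  obtain ⟨h1, h2, h3⟩ := hp
  have hr : 0 < p.1 ^ 2 + p.2 ^ 2 := by positivity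
  have hsq : 0 < Real.sqrt (p.1 ^ 2 + p.2 ^ 2) := Real.sqrt_pos.mpr hr
  have hq : 0 < p.2 / p.1 := by positivity
  refine ⟨(Real.log (Real.sqrt (p.1 ^ 2 + p.2 ^ 2)), Real.arctan (p.2 / p.1)), ?_, ?_, ?_⟩
  · exact Real.log_neg hsq (by rw [Real.sqrt_lt' one_pos]; simpa using h3)
  · exact ⟨Real.arctan_pos.mpr hq, Real.arctan_lt_pi_div_two _⟩
  · have e : Real.sqrt (p.1 ^ 2 + p.2 ^ 2) = p.1 * Real.sqrt (1 + (p.2 / p.1) ^ 2) := by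
      have : p.1 ^ 2 + p.2 ^ 2 = p.1 ^ 2 * (1 + (p.2 / p.1) ^ 2) := by field_simp
      rw [this, Real.sqrt_mul (by positivity), Real.sqrt_sq h1.le]
    have hs : 0 < Real.sqrt (1 + (p.2 / p.1) ^ 2) := Real.sqrt_pos.mpr (by positivity)
    simp only [psi, Real.exp_log hsq, Real.cos_arctan, Real.sin_arctan]
    rw [e]
    ext <;> simp <;> field_simp

lemma psi_angle {z : ℝ × ℝ} (h2 : z.2 ∈ Ioo 0 (π / 2)) :
    Real.arctan ((psi z).2 / (psi z).1) = z.2 := by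
  have : (psi z).2 / (psi z).1 = Real.tan z.2 := by
    rw [Real.tan_eq_sin_div_cos]
    simp only [psi]
    exact mul_div_mul_left _ _ (Real.exp_pos _).ne'
  rw [this, Real.arctan_tan (by linarith [h2.1, Real.pi_pos]) h2.2]

lemma psi_log (z : ℝ × ℝ) : Real.log (Real.sqrt ((psi z).1 ^ 2 + (psi z).2 ^ 2)) = z.1 := by
  rw [psi_sq, Real.sqrt_sq (Real.exp_pos _).le, Real.log_exp]

lemma w_eq (p q : ℝ) (h : 0 < p ^ 2 + q ^ 2) :
    w p q = Sn cV (Real.log (Real.sqrt (p ^ 2 + q ^ 2))) (Real.arctan (q / p)) :=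
  W_eq (Real.sqrt_pos.mpr h) _

lemma w_psi {z : ℝ × ℝ} (h2 : z.2 ∈ Ioo 0 (π / 2)) :
    w (psi z).1 (psi z).2 = Sn cV z.1 z.2 := by
  rw [w_eq _ _ (by rw [psi_sq]; positivity), psi_angle h2, psi_log]

lemma gradw_psi {z : ℝ × ℝ} (h1 : z.1 < 0) (h2 : z.2 ∈ Ioo 0 (π / 2)) :
    gradw (psi z) = Gmap z := by
  obtain ⟨hp, hq, -⟩ := psi_mem h1 h2
  have hlog := psi_log z
  have hang := psi_angle h2
  have hsq := psi_sq z
  have hpe : (psi z).1 = Real.exp z.1 * Real.cos z.2 := rfl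
  have hqe : (psi z).2 = Real.exp z.1 * Real.sin z.2 := rfl
  set p := (psi z).1
  set q := (psi z).2
  have hr : 0 < p ^ 2 + q ^ 2 := by positivity
  have he := Real.exp_pos z.1
  have hc : 0 < Real.cos z.2 := by rw [hpe] at hp; exact (mul_pos_iff_of_pos_left he).mp hp
  have hF := adm_cV.hasFDerivAt_Sn h1
  have hpt : (Real.log (Real.sqrt (p ^ 2 + q ^ 2)), Real.arctan (q / p)) = z := by
    rw [hlog, hang]
  have hlogsq : ∀ a b : ℝ, Real.log (Real.sqrt (a ^ 2 + b ^ 2)) = Real.log (a ^ 2 + b ^ 2) / 2 :=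
    fun a b => Real.log_sqrt (by positivity)
  have key : 1 / (1 + (q / p) ^ 2) = p ^ 2 / (p ^ 2 + q ^ 2) := by field_simp
  have hexp : Real.exp (-z.1) = 1 / Real.exp z.1 := by rw [Real.exp_neg, one_div]
  have hne : p ^ 2 + q ^ 2 ≠ 0 := hr.ne'
  -- the two partial derivatives, by the chain rule through `(log r, θ)`
  have hwp : wp p q = Real.exp (-z.1) * (Real.cos z.2 * Vs z.1 z.2 - Real.sin z.2 * Vt z.1 z.2) := by
    have d1 : HasDerivAt (fun t => Real.log (Real.sqrt (t ^ 2 + q ^ 2))) (p / (p ^ 2 + q ^ 2)) p := by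
      simp only [hlogsq]
      have := ((((hasDerivAt_id p).pow 2).add_const (q ^ 2)).log hne).div_const 2
      refine this.congr_deriv ?_
      simp; field_simp
    have d2 : HasDerivAt (fun t => Real.arctan (q / t)) (-q / (p ^ 2 + q ^ 2)) p := by
      have := ((hasDerivAt_const p q).div (hasDerivAt_id p) hp.ne').arctan
      refine this.congr_deriv ?_
      simp only [id, Pi.div_apply]
      rw [key]; field_simp; ring
    have d3 := HasFDerivAt.comp_hasDerivAt
      (f := fun t => (Real.log (Real.sqrt (t ^ 2 + q ^ 2)), Real.arctan (q / t))) p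
      (by rw [hpt]; exact hF) (d1.prodMk d2)
    have d4 : HasDerivAt (fun t => w t q) _ p := d3.congr_of_eventuallyEq
      (by filter_upwards [lt_mem_nhds hp] with t ht
          exact w_eq t q (by positivity))
    rw [wp, d4.deriv, hexp]
    simp only [_root_.add_apply, _root_.smul_apply,
      ContinuousLinearMap.coe_fst', ContinuousLinearMap.coe_snd', smul_eq_mul]
    rw [hsq, hpe, hqe]
    simp only [Vs, Vt]
    field_simp
    ring
  have hwq : wq p q = Real.exp (-z.1) * (Real.sin z.2 * Vs z.1 z.2 + Real.cos z.2 * Vt z.1 z.2) := by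
    have d1 : HasDerivAt (fun t => Real.log (Real.sqrt (p ^ 2 + t ^ 2))) (q / (p ^ 2 + q ^ 2)) q := by
      simp only [hlogsq]
      have := ((((hasDerivAt_id q).pow 2).const_add (p ^ 2)).log hne).div_const 2
      refine this.congr_deriv ?_
      simp; field_simp
    have d2 : HasDerivAt (fun t => Real.arctan (t / p)) (p / (p ^ 2 + q ^ 2)) q := by
      have := ((hasDerivAt_id q).div_const p).arctan
      refine this.congr_deriv ?_
      simp only [id]
      rw [key]; field_simp
    have d3 := HasFDerivAt.comp_hasDerivAt
      (f := fun t => (Real.log (Real.sqrt (p ^ 2 + t ^ 2)), Real.arctan (t / p))) q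
      (by rw [hpt]; exact hF) (d1.prodMk d2)
    have d4 : HasDerivAt (fun t => w p t) _ q := d3.congr_of_eventuallyEq
      (by filter_upwards with t
          exact w_eq p t (by positivity))
    rw [wq, d4.deriv, hexp]
    simp only [_root_.add_apply, _root_.smul_apply,
      ContinuousLinearMap.coe_fst', ContinuousLinearMap.coe_snd', smul_eq_mul]
    rw [hsq, hpe, hqe]
    simp only [Vs, Vt]
    field_simp
  exact Prod.ext hwp hwq

lemma analyticAt_psi (z : ℝ × ℝ) : AnalyticAt ℝ psi z := by
  have hc : AnalyticAt ℝ (fun z : ℝ × ℝ => Real.cos z.2) z :=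
    Real.analyticAt_cos.comp (f := fun z : ℝ × ℝ => z.2) analyticAt_snd
  have hs : AnalyticAt ℝ (fun z : ℝ × ℝ => Real.sin z.2) z :=
    Real.analyticAt_sin.comp (f := fun z : ℝ × ℝ => z.2) analyticAt_snd
  have he : AnalyticAt ℝ (fun z : ℝ × ℝ => Real.exp z.1) z :=
    AnalyticAt.rexp (f := fun z : ℝ × ℝ => z.1) analyticAt_fst
  exact (he.mul hc).prod (he.mul hs)

lemma analyticAt_Gmap {z : ℝ × ℝ} (h1 : z.1 < 0) : AnalyticAt ℝ Gmap z := by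
  have hc : AnalyticAt ℝ (fun z : ℝ × ℝ => Real.cos z.2) z :=
    Real.analyticAt_cos.comp (f := fun z : ℝ × ℝ => z.2) analyticAt_snd
  have hs : AnalyticAt ℝ (fun z : ℝ × ℝ => Real.sin z.2) z :=
    Real.analyticAt_sin.comp (f := fun z : ℝ × ℝ => z.2) analyticAt_snd
  have he : AnalyticAt ℝ (fun z : ℝ × ℝ => Real.exp (-z.1)) z :=
    AnalyticAt.rexp (f := fun z : ℝ × ℝ => -z.1) analyticAt_fst.neg
  have hVs : AnalyticAt ℝ (fun z : ℝ × ℝ => Vs z.1 z.2) z := adm_cV.mul_freq.mul_freq.analyticAt_Sn h1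
  have hVt : AnalyticAt ℝ (fun z : ℝ × ℝ => Vt z.1 z.2) z := adm_cV.mul_freq.analyticAt_Cs h1
  exact (he.mul ((hc.mul hVs).sub (hs.mul hVt))).prod (he.mul ((hs.mul hVs).add (hc.mul hVt)))

/-- The differential of `Gmap` is `exp (-s)` times a rotation applied to the symmetric matrix with
rows `(V_ss - V_s, T)` and `(T, 0)`, `T = V_sθ - V_θ`. The zero entry `V_θθ + V_s` is the heat
equation. -/
lemma hasFDerivAt_Gmap {z : ℝ × ℝ} (h1 : z.1 < 0) :
    ∃ D : ℝ × ℝ →L[ℝ] ℝ × ℝ, HasFDerivAt Gmap D z ∧ ∀ v,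
      D v = (Real.exp (-z.1) * (Real.cos z.2 *
          ((Sn (mm (mm (mm (mm cV)))) z.1 z.2 - Sn (mm (mm cV)) z.1 z.2) * v.1 + Tm z.1 z.2 * v.2)
          - Real.sin z.2 * (Tm z.1 z.2 * v.1)),
        Real.exp (-z.1) * (Real.sin z.2 *
          ((Sn (mm (mm (mm (mm cV)))) z.1 z.2 - Sn (mm (mm cV)) z.1 z.2) * v.1 + Tm z.1 z.2 * v.2)
          + Real.cos z.2 * (Tm z.1 z.2 * v.1))) := by
  have hc : HasFDerivAt (fun z : ℝ × ℝ => Real.cos z.2) _ z :=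
    (hasFDerivAt_snd (𝕜 := ℝ) (p := z)).cos
  have hs : HasFDerivAt (fun z : ℝ × ℝ => Real.sin z.2) _ z :=
    (hasFDerivAt_snd (𝕜 := ℝ) (p := z)).sin
  have he : HasFDerivAt (fun z : ℝ × ℝ => Real.exp (-z.1)) _ z :=
    (hasFDerivAt_fst (𝕜 := ℝ) (p := z)).neg.exp
  have hVs : HasFDerivAt (fun z : ℝ × ℝ => Vs z.1 z.2) _ z :=
    adm_cV.mul_freq.mul_freq.hasFDerivAt_Sn h1
  have hVt : HasFDerivAt (fun z : ℝ × ℝ => Vt z.1 z.2) _ z :=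
    adm_cV.mul_freq.hasFDerivAt_Cs h1
  refine ⟨_, (he.mul ((hc.mul hVs).sub (hs.mul hVt))).prodMk
    (he.mul ((hs.mul hVs).add (hc.mul hVt))), fun v => ?_⟩
  simp only [Tm]
  ext <;> simp [Vs, Vt] <;> ring

/-- Off the ray `θ = π/4` the differential of `Gmap` is invertible, its determinant being
`-exp (-2s) T² ≠ 0`. -/
lemma exists_equiv_fderiv_Gmap {z : ℝ × ℝ} (h1 : z.1 < 0) (h2 : z.2 ∈ Ioo 0 (π / 2))
    (hne : z.2 ≠ π / 4) : ∃ D : (ℝ × ℝ) ≃L[ℝ] ℝ × ℝ, fderiv ℝ Gmap z = D := by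
  obtain ⟨D, hD, hv⟩ := hasFDerivAt_Gmap h1
  have hT := Tm_ne_zero h1 h2 hne
  have hinj : Function.Injective (D : ℝ × ℝ →ₗ[ℝ] ℝ × ℝ) := by
    rw [injective_iff_map_eq_zero]
    intro v h0
    have h0' : D v = 0 := h0
    rw [hv, Prod.ext_iff] at h0'
    obtain ⟨e1, e2⟩ := h0'
    simp only [Prod.fst_zero, Prod.snd_zero, mul_eq_zero, (Real.exp_pos _).ne', false_or] at e1 e2
    have hcs := Real.cos_sq_add_sin_sq z.2
    have k1 : Tm z.1 z.2 * v.1 = 0 := by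
      linear_combination Real.cos z.2 * e2 - Real.sin z.2 * e1 - Tm z.1 z.2 * v.1 * hcs
    have hv1 : v.1 = 0 := (mul_eq_zero.mp k1).resolve_left hT
    rw [hv1] at e1 e2
    have k2 : Tm z.1 z.2 * v.2 = 0 := by
      linear_combination Real.cos z.2 * e1 + Real.sin z.2 * e2 - Tm z.1 z.2 * v.2 * hcs
    exact Prod.ext hv1 ((mul_eq_zero.mp k2).resolve_left hT)
  refine ⟨(LinearEquiv.ofInjectiveEndo (D : ℝ × ℝ →ₗ[ℝ] ℝ × ℝ) hinj).toContinuousLinearEquiv, ?_⟩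
  rw [hD.fderiv]
  ext <;> simp

/-- The analytic inverse function theorem for `Gmap` off the ray `θ = π/4`. -/
lemma exists_local_inverse {z : ℝ × ℝ} (h1 : z.1 < 0) (h2 : z.2 ∈ Ioo 0 (π / 2))
    (hne : z.2 ≠ π / 4) : ∃ K : ℝ × ℝ → ℝ × ℝ, AnalyticAt ℝ K (Gmap z) ∧ K (Gmap z) = z ∧
      ∀ᶠ y in 𝓝 (Gmap z), Gmap (K y) = y ∧ (K y).1 < 0 ∧ (K y).2 ∈ Ioo 0 (π / 2) := by
  obtain ⟨D, hD⟩ := exists_equiv_fderiv_Gmap h1 h2 hne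
  have hA := analyticAt_Gmap h1
  have hstrict := hA.hasStrictFDerivAt
  rw [hD] at hstrict
  set e := hstrict.toOpenPartialHomeomorph Gmap with he
  have hcoe : (e : ℝ × ℝ → ℝ × ℝ) = Gmap := hstrict.toOpenPartialHomeomorph_coe
  have hsrc : z ∈ e.source := hstrict.mem_toOpenPartialHomeomorph_source
  have hK : AnalyticAt ℝ e.symm (e z) :=
    e.analyticAt_symm' hsrc (by rw [hcoe]; exact hA) (by rw [hcoe]; exact hD)
  have hKz : e.symm (e z) = z := e.left_inv hsrc
  rw [hcoe] at hK hKz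
  refine ⟨e.symm, hK, hKz, ?_⟩
  have hright : ∀ᶠ y in 𝓝 (Gmap z), Gmap (e.symm y) = y := by
    have := e.eventually_right_inverse' hsrc
    rwa [hcoe] at this
  have hdom : ∀ᶠ x in 𝓝 (e.symm (Gmap z)), x.1 < 0 ∧ x.2 ∈ Ioo 0 (π / 2) := by
    rw [hKz]
    exact (eventually_fst_neg h1).and (continuous_snd.continuousAt.eventually (Ioo_mem_nhds h2.1 h2.2))
  filter_upwards [hright, hK.continuousAt.eventually hdom] with y hy hy'
  exact ⟨hy, hy'⟩

/-! ### Boundary values at `r = 1` -/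

/-- The Fourier series of a triangle wave, obtained by removing the even terms from the series of
the second Bernoulli polynomial. -/
lemma hasSum_cos_div_sq {θ : ℝ} (hθ : θ ∈ Icc 0 (π / 2)) :
    HasSum (fun n : ℕ => 8 / π / mR n ^ 2 * Real.cos (mR n * θ)) (π / 4 - θ) := by
  have hpi := Real.pi_pos
  have hB : ∀ x : ℝ, x ∈ Icc (0 : ℝ) 1 →
      HasSum (fun n : ℕ => 1 / (n : ℝ) ^ 2 * Real.cos (2 * π * n * x)) (π ^ 2 * (x ^ 2 - x + 1 / 6)) := by
    intro x hx
    have h := hasSum_one_div_nat_pow_mul_cos one_ne_zero hx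
    rw [show (2 * 1 : ℕ) = 2 from rfl] at h
    have e : (-1 : ℝ) ^ (1 + 1) * (2 * π) ^ 2 / 2 / (Nat.factorial 2 : ℝ) *
        (Polynomial.map (algebraMap ℚ ℝ) (Polynomial.bernoulli 2)).eval x =
        π ^ 2 * (x ^ 2 - x + 1 / 6) := by
      simp_rw [Polynomial.bernoulli, Finset.sum_range_succ, Polynomial.map_add,
        Polynomial.map_monomial]
      simp [bernoulli_two, bernoulli_one, Nat.factorial]
      ring
    rwa [e] at h
  have hx1 : θ / π ∈ Icc (0 : ℝ) 1 :=
    ⟨div_nonneg hθ.1 hpi.le, by rw [div_le_one hpi]; linarith [hθ.2]⟩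
  have hx2 : 2 * (θ / π) ∈ Icc (0 : ℝ) 1 := by
    refine ⟨by linarith [hx1.1], ?_⟩
    rw [← mul_div_assoc, div_le_one hpi]; linarith [hθ.2]
  have h1 := hB _ hx1
  have h2 := (hB _ hx2).mul_left (1 / 4)
  set f : ℕ → ℝ := fun n => 1 / (n : ℝ) ^ 2 * Real.cos (2 * π * n * (θ / π)) with hf
  have heven : HasSum (fun n => f (2 * n)) (1 / 4 * (π ^ 2 * ((2 * (θ / π)) ^ 2 - 2 * (θ / π) + 1 / 6))) := by
    refine (congrArg (HasSum · _) (funext fun n => ?_)).mpr h2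
    simp only [hf]
    rw [show 2 * π * ((2 * n : ℕ) : ℝ) * (θ / π) = 2 * π * n * (2 * (θ / π)) by push_cast; ring]
    push_cast
    rw [mul_pow, one_div, mul_inv]
    norm_num
    ring
  have hoddS : Summable fun n => f (2 * n + 1) :=
    h1.summable.comp_injective (i := fun n => 2 * n + 1) fun a b h => by simpa using h
  have hsum := (heven.even_add_odd hoddS.hasSum).unique h1
  have hodd := hoddS.hasSum
  have h3 := hodd.mul_left (8 / π / 4)
  have hval : 8 / π / 4 * ∑' n, f (2 * n + 1) = π / 4 - θ := by
    have : ∑' n, f (2 * n + 1) = π ^ 2 * ((θ / π) ^ 2 - θ / π + 1 / 6) -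
      1 / 4 * (π ^ 2 * ((2 * (θ / π)) ^ 2 - 2 * (θ / π) + 1 / 6)) := by linarith
    rw [this]
    field_simp
    ring
  rw [hval] at h3
  refine (congrArg (HasSum · _) (funext fun n => ?_)).mpr h3
  · simp only [hf]
    rw [show 2 * π * ((2 * n + 1 : ℕ) : ℝ) * (θ / π) = mR n * θ by
      simp only [mR, mIdx]; push_cast; field_simp; ring]
    have : mR n = 2 * ((2 * n + 1 : ℕ) : ℝ) := by simp only [mR, mIdx]; push_cast; ring
    rw [this, mul_pow]
    ring

lemma summable_div_sq : Summable fun n : ℕ => 8 / π / mR n ^ 2 := by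
  have h := (hasSum_cos_div_sq (θ := 0) ⟨le_rfl, by positivity⟩).summable
  simpa using h

lemma abs_cV_le (n : ℕ) : |cV n| ≤ 8 / π / mR n ^ 2 := by
  have hm := mR_ge n
  have h1 : mR n ^ 2 ≤ (mR n ^ 2 - 1) * mR n := by nlinarith
  have h2 : 0 < (mR n ^ 2 - 1) * mR n := by nlinarith
  rw [cV, abs_of_nonneg (by positivity)]
  gcongr

lemma abs_mm_cV_le (n : ℕ) : |mm cV n| ≤ 2 * (8 / π / mR n ^ 2) := by
  have hm := mR_ge n
  have h0 : 0 < mR n ^ 2 - 1 := by nlinarith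
  have e : mm cV n = 8 / π / (mR n ^ 2 - 1) := by
    have : mR n ≠ 0 := by linarith
    simp only [mm, cV]; field_simp
  rw [e, abs_of_nonneg (by positivity), ← mul_div_assoc, div_le_div_iff₀ h0 (by positivity)]
  have : 0 < 8 / π := by positivity
  have h1 : mR n ^ 2 ≤ 2 * (mR n ^ 2 - 1) := by nlinarith
  calc 8 / π * mR n ^ 2 ≤ 8 / π * (2 * (mR n ^ 2 - 1)) := by gcongr
    _ = _ := by ring

/-- The boundary function `W 1`. -/
noncomputable def W1 (θ : ℝ) : ℝ := ∑' n, cV n * Real.sin (mR n * θ)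
/-- The derivative of `W1`. -/
noncomputable def D1 (θ : ℝ) : ℝ := ∑' n, mm cV n * Real.cos (mR n * θ)
/-- An antiderivative of `-W1`. -/
noncomputable def E1 (θ : ℝ) : ℝ := ∑' n, cV n / mR n * Real.cos (mR n * θ)

lemma W_one (θ : ℝ) : W 1 θ = W1 θ := by
  rw [W_eq one_pos, W1, Sn]
  simp

lemma summable_W1 (θ : ℝ) : Summable fun n => cV n * Real.sin (mR n * θ) :=
  Summable.of_norm_bounded summable_div_sq fun n => by
    rw [norm_mul]
    exact (mul_le_of_le_one_right (norm_nonneg _) (Real.abs_sin_le_one _)).trans (abs_cV_le n)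

lemma summable_D1 (θ : ℝ) : Summable fun n => mm cV n * Real.cos (mR n * θ) :=
  Summable.of_norm_bounded (summable_div_sq.mul_left 2) fun n => by
    rw [norm_mul]
    exact (mul_le_of_le_one_right (norm_nonneg _) (Real.abs_cos_le_one _)).trans (abs_mm_cV_le n)

lemma summable_E1 (θ : ℝ) : Summable fun n => cV n / mR n * Real.cos (mR n * θ) :=
  Summable.of_norm_bounded summable_div_sq fun n => by
    rw [norm_mul]
    refine (mul_le_of_le_one_right (norm_nonneg _) (Real.abs_cos_le_one _)).trans ?_
    rw [norm_div, Real.norm_eq_abs, Real.norm_eq_abs]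
    refine (div_le_self (abs_nonneg _) ?_).trans (abs_cV_le n)
    rw [le_abs]; left; linarith [mR_ge n]

lemma hasDerivAt_W1 (θ : ℝ) : HasDerivAt W1 (D1 θ) θ := by
  refine hasDerivAt_tsum (y₀ := 0) (summable_div_sq.mul_left 2)
    (g := fun n t => cV n * Real.sin (mR n * t)) (g' := fun n t => mm cV n * Real.cos (mR n * t))
    (fun n t => ?_) (fun n t => ?_) (summable_W1 0) θ
  · refine ((((hasDerivAt_id t).const_mul (mR n)).sin).const_mul (cV n)).congr_deriv ?_
    simp [mm]; ring
  · rw [norm_mul]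
    exact (mul_le_of_le_one_right (norm_nonneg _) (Real.abs_cos_le_one _)).trans (abs_mm_cV_le n)

lemma hasDerivAt_E1 (θ : ℝ) : HasDerivAt E1 (-W1 θ) θ := by
  unfold W1
  rw [← tsum_neg]
  refine hasDerivAt_tsum (y₀ := 0) summable_div_sq
    (g := fun n t => cV n / mR n * Real.cos (mR n * t)) (g' := fun n t => -(cV n * Real.sin (mR n * t)))
    (fun n t => ?_) (fun n t => ?_) (summable_E1 0) θ
  · refine ((((hasDerivAt_id t).const_mul (mR n)).cos).const_mul (cV n / mR n)).congr_deriv ?_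
    have : mR n ≠ 0 := by linarith [mR_ge n]
    simp; field_simp
  · rw [norm_neg, norm_mul]
    exact (mul_le_of_le_one_right (norm_nonneg _) (Real.abs_sin_le_one _)).trans (abs_cV_le n)

lemma D1_eq {θ : ℝ} (hθ : θ ∈ Icc 0 (π / 2)) : D1 θ = E1 θ + (π / 4 - θ) := by
  rw [← (hasSum_cos_div_sq hθ).tsum_eq, D1, E1,
    ← (summable_E1 θ).tsum_add (hasSum_cos_div_sq hθ).summable]
  congr 1; ext n
  have hm := mR_ge n
  have h1 : mR n ^ 2 - 1 ≠ 0 := by nlinarith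
  have h2 : mR n ≠ 0 := by linarith
  simp only [mm, cV]
  field_simp
  ring

/-- The boundary values of `W`: since `Y = W1 + 1` satisfies `Y'' = -Y` on `[0, π/2]` with
`Y 0 = Y (π/2) = 1`, it equals `cos + sin`. The conserved quantities used are
`Y cos - Y' sin` and `Y sin + Y' cos`. -/
lemma W_one_eq {θ : ℝ} (hθ : θ ∈ Icc 0 (π / 2)) : W 1 θ = Real.cos θ + Real.sin θ - 1 := by
  rw [W_one]
  have hW0 : W1 0 = 0 := by simp [W1]
  have hWpi : W1 (π / 2) = 0 := by
    have : ∀ n, Real.sin (mR n * (π / 2)) = 0 := fun n => by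
      rw [show mR n * (π / 2) = ((2 * n + 1 : ℕ) : ℝ) * π by simp only [mR, mIdx]; push_cast; ring]
      exact Real.sin_nat_mul_pi _
    simp [W1, this]
  have hY : ∀ t, HasDerivAt (fun t => W1 t + 1) (D1 t) t := fun t => (hasDerivAt_W1 t).add_const 1
  have hZ : ∀ t, HasDerivAt (fun t => E1 t + (π / 4 - t)) (-W1 t + (0 - 1)) t := fun t =>
    (hasDerivAt_E1 t).add ((hasDerivAt_const t (π / 4)).sub (hasDerivAt_id t))
  have hP : ∀ t, HasDerivAt (fun t => (W1 t + 1) * Real.cos t - (E1 t + (π / 4 - t)) * Real.sin t)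
      ((D1 t - (E1 t + (π / 4 - t))) * Real.cos t) t := fun t =>
    (((hY t).mul (Real.hasDerivAt_cos t)).sub ((hZ t).mul (Real.hasDerivAt_sin t))).congr_deriv
      (by ring)
  have hQ : ∀ t, HasDerivAt (fun t => (W1 t + 1) * Real.sin t + (E1 t + (π / 4 - t)) * Real.cos t)
      ((D1 t - (E1 t + (π / 4 - t))) * Real.sin t) t := fun t =>
    (((hY t).mul (Real.hasDerivAt_sin t)).add ((hZ t).mul (Real.hasDerivAt_cos t))).congr_deriv
      (by ring)
  have cP := constant_of_has_deriv_right_zero (a := 0) (b := π / 2)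
    (fun t _ => (hP t).continuousAt.continuousWithinAt) (fun t ht => by
      have := (hP t).hasDerivWithinAt (s := Ici t)
      rwa [D1_eq ⟨ht.1, ht.2.le⟩, sub_self, zero_mul] at this)
  have cQ := constant_of_has_deriv_right_zero (a := 0) (b := π / 2)
    (fun t _ => (hQ t).continuousAt.continuousWithinAt) (fun t ht => by
      have := (hQ t).hasDerivWithinAt (s := Ici t)
      rwa [D1_eq ⟨ht.1, ht.2.le⟩, sub_self, zero_mul] at this)
  have p1 := cP θ hθ
  have q1 := cQ θ hθ
  have q2 := cQ (π / 2) ⟨by positivity, le_rfl⟩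
  simp only [Real.sin_pi_div_two, Real.cos_pi_div_two, Real.sin_zero, Real.cos_zero, hW0, hWpi] at p1 q1 q2
  have hcs := Real.cos_sq_add_sin_sq θ
  linear_combination Real.cos θ * p1 + Real.sin θ * q1 - Real.sin θ * q2 - (W1 θ + 1) * hcs

/-! ### The minimax formula -/

/-- `F` is touched from below at `t` by a function, differentiable near `t`, whose second
derivative at `t` is nonnegative (a one-dimensional viscosity-type convexity condition). -/
def TouchedBelow (F : ℝ → ℝ) (t : ℝ) : Prop :=
  ∃ (f f' : ℝ → ℝ) (f'' : ℝ), f t = F t ∧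
    (∀ᶠ s in 𝓝 t, f s ≤ F s ∧ HasDerivAt f (f' s) s) ∧ HasDerivAt f' f'' t ∧ 0 ≤ f''

/-- A continuous function touched from below by convex-to-second-order functions at every interior
point is minimal at any interior point where it is touched from below with slope zero. -/
lemma le_of_touchedBelow {F : ℝ → ℝ} {a b : ℝ} (hF : Continuous F)
    (ht : ∀ t ∈ Ioo a b, TouchedBelow F t) {t₀ : ℝ} (ht₀ : t₀ ∈ Ioo a b) {f₀ : ℝ → ℝ}
    (h0 : f₀ t₀ = F t₀) (hle : ∀ᶠ s in 𝓝 t₀, f₀ s ≤ F s) (hd : HasDerivAt f₀ 0 t₀)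
    {t₂ : ℝ} (ht₂ : t₂ ∈ Icc a b) : F t₀ ≤ F t₂ := by
  by_contra! hlt
  set d := t₂ - t₀ with hd_def
  set η := (F t₀ - F t₂) / 4 with hη_def
  have hη : 0 < η := by rw [hη_def]; linarith
  -- perturb `F` along the segment from `t₀` to `t₂` by a small strictly convex increasing function
  let H : ℝ → ℝ := fun t => F (t₀ + t * d) + (η * t + η * t ^ 2)
  have hHc : Continuous H := by fun_prop
  obtain ⟨t₁, ht₁, hmax⟩ := isCompact_Icc.exists_isMaxOn (nonempty_Icc.mpr zero_le_one)
    hHc.continuousOn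
  have hline : ∀ t, HasDerivAt (fun t => t₀ + t * d) d t := fun t => by
    simpa using ((hasDerivAt_id t).mul_const d).const_add t₀
  have hquad : ∀ t, HasDerivAt (fun t => η * t + η * t ^ 2) (η + 2 * η * t) t := fun t => by
    refine (((hasDerivAt_id t).const_mul η).add (((hasDerivAt_id t).pow 2).const_mul η)).congr_deriv ?_
    simp; ring
  have hH0 : H 0 = F t₀ := by simp [H]
  have hH1 : H 1 < H 0 := by
    rw [hH0]
    simp only [H, hd_def]
    rw [show t₀ + 1 * (t₂ - t₀) = t₂ by ring]
    linarith
  -- the maximum is not at the left end, where the perturbed function increases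
  have hgt : ∃ t ∈ Icc (0 : ℝ) 1, H 0 < H t := by
    have hd1 : HasDerivAt (fun t => f₀ (t₀ + t * d) + (η * t + η * t ^ 2)) η 0 := by
      have h1 : HasDerivAt (fun t => f₀ (t₀ + t * d)) (0 * d) 0 :=
        HasDerivAt.comp (h₂ := f₀) (h := fun t => t₀ + t * d) 0 (by simpa using hd) (hline 0)
      refine (h1.add (hquad 0)).congr_deriv (by ring)
    have h2 : ∀ᶠ t in 𝓝[>] (0 : ℝ), 0 < slope (fun t => f₀ (t₀ + t * d) + (η * t + η * t ^ 2)) 0 t :=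
      ((hasDerivAt_iff_tendsto_slope.mp hd1).mono_left
        (nhdsWithin_mono _ fun t (ht : 0 < t) => ht.ne')).eventually (lt_mem_nhds hη)
    have h3 : ∀ᶠ t in 𝓝[>] (0 : ℝ), f₀ (t₀ + t * d) ≤ F (t₀ + t * d) := by
      have : Tendsto (fun t => t₀ + t * d) (𝓝 0) (𝓝 t₀) := by
        simpa using (hline 0).continuousAt.tendsto
      exact (this.eventually hle).filter_mono nhdsWithin_le_nhds
    obtain ⟨t, h2, h3, h4⟩ := (h2.and (h3.and (Ioo_mem_nhdsGT (zero_lt_one' ℝ)))).exists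
    refine ⟨t, ⟨h4.1.le, h4.2.le⟩, ?_⟩
    rw [slope_def_field, sub_zero, div_pos_iff_of_pos_right h4.1] at h2
    simp only [zero_mul, mul_zero, add_zero, h0, ne_eq, OfNat.ofNat_ne_zero, not_false_eq_true,
      zero_pow] at h2
    rw [hH0]
    simp only [H]
    linarith
  obtain ⟨t₃, ht₃, hgt⟩ := hgt
  have hge : ∀ t ∈ Icc (0 : ℝ) 1, H t ≤ H t₁ := fun t ht => hmax ht
  have h10 : t₁ ≠ 0 := by
    rintro rfl
    exact (hge t₃ ht₃).not_gt hgt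
  have h11 : t₁ ≠ 1 := by
    rintro rfl
    exact (hge 0 (by simp)).not_gt hH1
  have hI : t₁ ∈ Ioo (0 : ℝ) 1 := ⟨ht₁.1.lt_of_ne' h10, ht₁.2.lt_of_ne h11⟩
  have hm : t₀ + t₁ * d ∈ Ioo a b := by
    have e : t₀ + t₁ * d = (1 - t₁) * t₀ + t₁ * t₂ := by rw [hd_def]; ring
    rw [e]
    constructor <;> nlinarith [ht₀.1, ht₀.2, ht₂.1, ht₂.2, hI.1, hI.2]
  obtain ⟨f, f', f'', hf0, hfle, hf', hf''⟩ := ht _ hm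
  have hev : ∀ᶠ t in 𝓝 t₁, f (t₀ + t * d) ≤ F (t₀ + t * d) ∧
      HasDerivAt f (f' (t₀ + t * d)) (t₀ + t * d) :=
    (hline t₁).continuousAt.eventually hfle
  set h : ℝ → ℝ := fun t => f (t₀ + t * d) + (η * t + η * t ^ 2) with hh
  have hloc : IsLocalMax h t₁ := by
    filter_upwards [hev, Icc_mem_nhds hI.1 hI.2] with t ht htI
    have := hge t htI
    simp only [H] at this
    simp only [hh]
    linarith [ht.1]
  have hdh : ∀ᶠ t in 𝓝 t₁, HasDerivAt h (f' (t₀ + t * d) * d + (η + 2 * η * t)) t := by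
    filter_upwards [hev] with t ht
    exact (HasDerivAt.comp (h₂ := f) (h := fun t => t₀ + t * d) t ht.2 (hline t)).add (hquad t)
  have hdd : HasDerivAt (deriv h) (f'' * d * d + 2 * η) t₁ := by
    have h1 : HasDerivAt (fun t => f' (t₀ + t * d) * d) (f'' * d * d) t₁ :=
      (HasDerivAt.comp (h₂ := f') (h := fun t => t₀ + t * d) t₁ hf' (hline t₁)).mul_const d
    have h2 : HasDerivAt (fun t => η + 2 * η * t) (2 * η) t₁ := by
      simpa using ((hasDerivAt_id t₁).const_mul (2 * η)).const_add η
    exact (h1.add h2).congr_of_eventuallyEq (hdh.mono fun t ht => ht.deriv)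
  have hpos : 0 < f'' * d * d + 2 * η := by nlinarith [mul_nonneg hf'' (mul_self_nonneg d)]
  have hmin : IsLocalMin h t₁ := isLocalMin_of_deriv_deriv_pos (by rw [hdd.deriv]; exact hpos)
    hloc.deriv_eq_zero hdh.self_of_nhds.continuousAt
  -- a point that is both a local maximum and a local minimum kills the second derivative
  have hconst : h =ᶠ[𝓝 t₁] fun _ => h t₁ := by
    filter_upwards [hloc, hmin] with t k1 k2
    exact le_antisymm k1 k2
  have hz : deriv (deriv h) t₁ = 0 := by
    rw [hconst.deriv.deriv_eq]; simp
  rw [hdd.deriv] at hz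
  exact hpos.ne' hz

/-- `W` is continuous up to `r = 0` and `r = 1`, by uniform convergence. -/
lemma continuousOn_W : ContinuousOn (fun z : ℝ × ℝ => W z.1 z.2) (Icc 0 1 ×ˢ univ) := by
  have h : ∀ z : ℝ × ℝ, W z.1 z.2 = ∑' n, cV n * (z.1 ^ (mIdx n ^ 2) * Real.sin (mR n * z.2)) := by
    intro z
    unfold W
    rw [← tsum_mul_left]
    congr 1; ext n
    simp only [cV, mR]
    ring
  simp_rw [h]
  refine continuousOn_tsum (fun n => by fun_prop) summable_div_sq fun n z hz => ?_
  rw [norm_mul, norm_mul, norm_pow, Real.norm_of_nonneg hz.1.1]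
  refine (mul_le_of_le_one_right (norm_nonneg _) ?_).trans (abs_cV_le n)
  exact mul_le_one₀ (pow_le_one₀ hz.1.1 hz.1.2) (norm_nonneg _) (Real.abs_sin_le_one _)

lemma W_zero (θ : ℝ) : W 0 θ = 0 := by
  have : ∀ n, (0 : ℝ) ^ (mIdx n ^ 2) = 0 := fun n => by
    rw [zero_pow]; simp [mIdx]
  simp [W, this]

/-- The function whose minimax is `u`. -/
noncomputable def Phi (x y r θ : ℝ) : ℝ := r * (x * Real.cos θ + y * Real.sin θ) - W r θ

/-- The inner maximum over `r ∈ [0, 1]`. -/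
noncomputable def Fmax (x y θ : ℝ) : ℝ := ⨆ r : Icc (0 : ℝ) 1, Phi x y r θ

lemma continuous_Phi (x y : ℝ) : Continuous fun z : ℝ × Icc (0 : ℝ) 1 => Phi x y z.2 z.1 := by
  have h : Continuous fun z : ℝ × Icc (0 : ℝ) 1 => W z.2 z.1 :=
    continuousOn_W.comp_continuous (f := fun z : ℝ × Icc (0 : ℝ) 1 => ((z.2 : ℝ), z.1))
      (by fun_prop) fun z => ⟨z.2.2, mem_univ _⟩
  unfold Phi
  fun_prop

lemma continuous_Fmax (x y : ℝ) : Continuous (Fmax x y) := by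
  have h := (isCompact_univ (X := Icc (0 : ℝ) 1)).continuous_sSup
    (f := fun (θ : ℝ) (r : Icc (0 : ℝ) 1) => Phi x y r θ) (continuous_Phi x y)
  simp only [image_univ, sSup_range] at h
  exact h

lemma Phi_le_Fmax (x y θ : ℝ) {r : ℝ} (hr : r ∈ Icc (0 : ℝ) 1) : Phi x y r θ ≤ Fmax x y θ := by
  have hc : Continuous fun r : Icc (0 : ℝ) 1 => Phi x y r θ :=
    (continuous_Phi x y).comp (by fun_prop : Continuous fun r : Icc (0 : ℝ) 1 => (θ, r))
  exact le_ciSup (isCompact_range hc).bddAbove ⟨r, hr⟩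

lemma exists_Fmax_eq (x y θ : ℝ) :
    ∃ r ∈ Icc (0 : ℝ) 1, Phi x y r θ = Fmax x y θ ∧ ∀ r' ∈ Icc (0 : ℝ) 1, Phi x y r' θ ≤ Phi x y r θ := by
  have hc : Continuous fun r : Icc (0 : ℝ) 1 => Phi x y r θ :=
    (continuous_Phi x y).comp (by fun_prop : Continuous fun r : Icc (0 : ℝ) 1 => (θ, r))
  obtain ⟨r, -, hr⟩ := isCompact_univ.exists_isMaxOn univ_nonempty hc.continuousOn
  have hr' : ∀ r' : Icc (0 : ℝ) 1, Phi x y r' θ ≤ Phi x y r θ := fun r' => hr (mem_univ r')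
  exact ⟨r, r.2, le_antisymm (Phi_le_Fmax x y θ r.2) (ciSup_le hr'), fun r' h => hr' ⟨r', h⟩⟩

lemma Phi_exp (x y s θ : ℝ) : Phi x y (Real.exp s) θ =
    Real.exp s * (x * Real.cos θ + y * Real.sin θ) - Sn cV s θ := by rw [Phi, W_exp]

lemma hasDerivAt_Phi_exp (x y : ℝ) {s : ℝ} (hs : s < 0) (θ : ℝ) :
    HasDerivAt (fun s => Phi x y (Real.exp s) θ)
      (Real.exp s * (x * Real.cos θ + y * Real.sin θ) - Vs s θ) s := by
  simp_rw [Phi_exp]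
  exact ((Real.hasDerivAt_exp s).mul_const _).sub (adm_cV.hasDerivAt_Sn_fst hs θ)

lemma hasDerivAt_trig (x y θ : ℝ) : HasDerivAt (fun θ => x * Real.cos θ + y * Real.sin θ)
    (y * Real.cos θ - x * Real.sin θ) θ :=
  (((Real.hasDerivAt_cos θ).const_mul x).add ((Real.hasDerivAt_sin θ).const_mul y)).congr_deriv
    (by ring)

lemma hasDerivAt_Phi_angle (x y : ℝ) {s : ℝ} (hs : s < 0) (θ : ℝ) :
    HasDerivAt (fun θ => Phi x y (Real.exp s) θ)
      (Real.exp s * (y * Real.cos θ - x * Real.sin θ) - Vt s θ) θ := by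
  simp_rw [Phi_exp]
  exact ((hasDerivAt_trig x y θ).const_mul _).sub (adm_cV.hasDerivAt_Sn_snd hs θ)

/-- The touching function at `θ` is `Phi x y r` for a maximising `r`. For `r = 0` it vanishes, for
`r = 1` it is explicit by `W_one_eq`, and for `0 < r < 1` its second derivative is zero by
stationarity in `r` and the heat equation. -/
lemma touchedBelow_Fmax {x y : ℝ} (hx : x < 1) (hy : y < 1) {θ : ℝ} (hθ : θ ∈ Ioo 0 (π / 2)) :
    TouchedBelow (Fmax x y) θ := by
  obtain ⟨r, hr, hrF, hmax⟩ := exists_Fmax_eq x y θ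
  rcases hr.1.eq_or_lt with rfl | h0
  · refine ⟨fun _ => 0, fun _ => 0, 0, ?_, ?_, hasDerivAt_const _ _, le_rfl⟩
    · rw [← hrF]; simp [Phi, W_zero]
    · filter_upwards with t
      refine ⟨?_, hasDerivAt_const _ _⟩
      have := Phi_le_Fmax x y t hr
      simpa [Phi, W_zero] using this
  rcases hr.2.eq_or_lt with rfl | h1
  · have e : ∀ t ∈ Icc 0 (π / 2), Phi x y 1 t = (x - 1) * Real.cos t + (y - 1) * Real.sin t + 1 := by
      intro t ht
      rw [Phi, W_one_eq ht]; ring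
    refine ⟨fun t => (x - 1) * Real.cos t + (y - 1) * Real.sin t + 1,
      fun t => (y - 1) * Real.cos t + (1 - x) * Real.sin t,
      (1 - x) * Real.cos θ - (y - 1) * Real.sin θ, ?_, ?_, ?_, ?_⟩
    · rw [← hrF, e θ ⟨hθ.1.le, hθ.2.le⟩]
    · filter_upwards [Icc_mem_nhds hθ.1 hθ.2] with t ht
      refine ⟨by rw [← e t ht]; exact Phi_le_Fmax x y t hr, ?_⟩
      exact ((hasDerivAt_trig (x - 1) (y - 1) t).add_const 1).congr_deriv (by ring)
    · exact hasDerivAt_trig (y - 1) (1 - x) θ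
    · have hc : 0 < Real.cos θ := Real.cos_pos_of_mem_Ioo ⟨by linarith [hθ.1, Real.pi_pos], hθ.2⟩
      have hs : 0 < Real.sin θ :=
        Real.sin_pos_of_pos_of_lt_pi hθ.1 (by linarith [hθ.2, Real.pi_pos])
      nlinarith
  · have hs : Real.log r < 0 := Real.log_neg h0 h1
    have hexp : Real.exp (Real.log r) = r := Real.exp_log h0
    set s := Real.log r with hs_def
    -- stationarity in `r` at an interior maximum
    have hloc : IsLocalMax (fun s => Phi x y (Real.exp s) θ) s := by
      filter_upwards [gt_mem_nhds hs] with s' hs'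
      rw [hexp]
      exact hmax _ ⟨(Real.exp_pos _).le, Real.exp_le_one_iff.mpr hs'.le⟩
    have hstat := hloc.hasDerivAt_eq_zero (hasDerivAt_Phi_exp x y hs θ)
    refine ⟨fun t => Phi x y (Real.exp s) t, fun t =>
      Real.exp s * (y * Real.cos t - x * Real.sin t) - Vt s t, 0, ?_, ?_, ?_, le_rfl⟩
    · rw [hexp, ← hrF]
    · filter_upwards with t
      refine ⟨?_, hasDerivAt_Phi_angle x y hs t⟩
      rw [hexp]
      exact Phi_le_Fmax x y t hr
    · -- the heat equation `V_θθ = -V_s` turns stationarity in `s` into `Φ_θθ = 0`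
      have h2 := ((hasDerivAt_trig y (-x) θ).const_mul (Real.exp s)).sub
        (adm_cV.mul_freq.hasDerivAt_Cs_snd hs θ)
      refine (h2.congr_deriv ?_).congr_of_eventuallyEq ?_
      · simp only [Vs] at hstat
        linear_combination -hstat
      · filter_upwards with t
        simp only [Vt, Pi.sub_apply]
        ring

/-- At the angle of the preimage of `(x, y)` under `∇w`, the inner maximum is attained at the modulus
of that preimage, because `s ↦ exp (-s) V_s` is nondecreasing. -/
lemma Fmax_eq {z : ℝ × ℝ} (h1 : z.1 < 0) (h2 : z.2 ∈ Ioo 0 (π / 2)) :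
    Fmax (Gmap z).1 (Gmap z).2 z.2 = Phi (Gmap z).1 (Gmap z).2 (Real.exp z.1) z.2 := by
  set x := (Gmap z).1 with hx
  set y := (Gmap z).2 with hy
  obtain ⟨s, θ⟩ := z
  simp only at h1 h2 ⊢
  let M : ℝ → ℝ := fun t => Real.exp (-t) * Vs t θ
  have hM : ∀ t < 0, HasDerivAt M (Real.exp (-t) *
      (Sn (mm (mm (mm (mm cV)))) t θ - Sn (mm (mm cV)) t θ)) t := fun t ht => by
    have h := ((hasDerivAt_id t).neg.exp).mul (adm_cV.mul_freq.mul_freq.hasDerivAt_Sn_fst ht θ)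
    refine h.congr_deriv ?_
    simp; ring
  have hMmono : MonotoneOn M (Iio 0) := by
    refine monotoneOn_of_deriv_nonneg (convex_Iio 0)
      (fun t ht => (hM t ht).continuousAt.continuousWithinAt) ?_ ?_ <;> rw [interior_Iio]
    · exact fun t ht => (hM t ht).differentiableAt.differentiableWithinAt
    · intro t ht
      rw [(hM t ht).deriv]
      exact mul_nonneg (Real.exp_pos _).le (Vss_sub_nonneg ht h2)
  have hX : x * Real.cos θ + y * Real.sin θ = M s := by
    simp only [hx, hy, Gmap, M]
    linear_combination Real.exp (-s) * Vs s θ * Real.cos_sq_add_sin_sq θ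
  have hk : ∀ t < 0, HasDerivAt (fun s => Phi x y (Real.exp s) θ) (Real.exp t * (M s - M t)) t :=
    fun t ht => (hasDerivAt_Phi_exp x y ht θ).congr_deriv (by
      have : Real.exp t * Real.exp (-t) = 1 := by rw [← Real.exp_add]; simp
      rw [hX]; simp only [M]; linear_combination Vs t θ * this)
  have hleft : MonotoneOn (fun s => Phi x y (Real.exp s) θ) (Iic s) := by
    refine monotoneOn_of_deriv_nonneg (convex_Iic s)
      (fun t ht => (hk t (lt_of_le_of_lt ht h1)).continuousAt.continuousWithinAt) ?_ ?_ <;>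
      rw [interior_Iic]
    · exact fun t ht => (hk t (lt_trans ht h1)).differentiableAt.differentiableWithinAt
    · intro t ht
      have ht0 : t < 0 := lt_trans ht h1
      rw [(hk t ht0).deriv]
      exact mul_nonneg (Real.exp_pos _).le (sub_nonneg.mpr (hMmono ht0 h1 (le_of_lt ht)))
  have hright : AntitoneOn (fun s => Phi x y (Real.exp s) θ) (Ico s 0) := by
    refine antitoneOn_of_deriv_nonpos (convex_Ico s 0)
      (fun t ht => (hk t ht.2).continuousAt.continuousWithinAt) ?_ ?_ <;>
      rw [interior_Ico]
    · exact fun t ht => (hk t ht.2).differentiableAt.differentiableWithinAt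
    · intro t ht
      rw [(hk t ht.2).deriv]
      exact mul_nonpos_of_nonneg_of_nonpos (Real.exp_pos _).le
        (sub_nonpos.mpr (hMmono h1 ht.2 ht.1.le))
  have hopen : ∀ r ∈ Ioo (0 : ℝ) 1, Phi x y r θ ≤ Phi x y (Real.exp s) θ := by
    intro r hr
    have hs : Real.log r < 0 := Real.log_neg hr.1 hr.2
    rw [← Real.exp_log hr.1]
    rcases le_total (Real.log r) s with h | h
    · exact hleft h self_mem_Iic h
    · exact hright ⟨le_rfl, h1⟩ ⟨h, hs⟩ h
  have hclos : closure (Ioo (0 : ℝ) 1) = Icc 0 1 := closure_Ioo zero_ne_one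
  have hcont : ContinuousOn (fun r => Phi x y r θ) (closure (Ioo (0 : ℝ) 1)) := by
    rw [hclos, continuousOn_iff_continuous_domRestrict]
    exact (continuous_Phi x y).comp (by fun_prop : Continuous fun r : Icc (0 : ℝ) 1 => (θ, r))
  refine le_antisymm (ciSup_le fun r => ?_)
    (Phi_le_Fmax x y θ ⟨(Real.exp_pos _).le, Real.exp_le_one_iff.mpr h1.le⟩)
  exact le_on_closure hopen hcont continuousOn_const (by rw [hclos]; exact r.2)

/-- The minimax formula equals the Legendre expression `⟨x, g x⟩ - w (g x)`. -/
lemma u_eq {z : ℝ × ℝ} (h1 : z.1 < 0) (h2 : z.2 ∈ Ioo 0 (π / 2)) (hx : (Gmap z).1 < 1)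
    (hy : (Gmap z).2 < 1) :
    u (Gmap z).1 (Gmap z).2 = (Gmap z).1 * (psi z).1 + (Gmap z).2 * (psi z).2 - Sn cV z.1 z.2 := by
  have hF := Fmax_eq h1 h2
  have hL : Phi (Gmap z).1 (Gmap z).2 (Real.exp z.1) z.2 =
      (Gmap z).1 * (psi z).1 + (Gmap z).2 * (psi z).2 - Sn cV z.1 z.2 := by
    rw [Phi_exp]; simp only [psi]; ring
  rw [← hL, ← hF]
  set x := (Gmap z).1 with hx_def
  set y := (Gmap z).2 with hy_def
  have hd : HasDerivAt (fun θ => Phi x y (Real.exp z.1) θ) 0 z.2 := by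
    refine (hasDerivAt_Phi_angle x y h1 z.2).congr_deriv ?_
    have h : Real.exp z.1 * Real.exp (-z.1) = 1 := by rw [← Real.exp_add]; simp
    simp only [hx_def, hy_def, Gmap]
    have hcs := Real.cos_sq_add_sin_sq z.2
    linear_combination Vt z.1 z.2 * (Real.cos z.2 ^ 2 + Real.sin z.2 ^ 2) * h + Vt z.1 z.2 * hcs
  have hmin : ∀ θ ∈ Icc 0 (π / 2), Fmax x y z.2 ≤ Fmax x y θ := fun θ hθ =>
    le_of_touchedBelow (continuous_Fmax x y) (fun t ht => touchedBelow_Fmax hx hy ht) h2 hF.symm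
      (Eventually.of_forall fun t =>
        Phi_le_Fmax x y t ⟨(Real.exp_pos _).le, Real.exp_le_one_iff.mpr h1.le⟩) hd hθ
  have hz : z.2 ∈ Icc 0 (π / 2) := ⟨h2.1.le, h2.2.le⟩
  have : Nonempty (Icc (0 : ℝ) (π / 2)) := ⟨⟨z.2, hz⟩⟩
  have hu : u x y = ⨅ θ : Icc (0 : ℝ) (π / 2), Fmax x y θ := rfl
  rw [hu]
  refine le_antisymm (ciInf_le ⟨Fmax x y z.2, ?_⟩ (⟨z.2, hz⟩ : Icc (0 : ℝ) (π / 2)))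
    (le_ciInf fun θ => hmin θ θ.2)
  rintro _ ⟨θ, rfl⟩
  exact hmin θ θ.2

/-- Along the diagonal direction `θ = π/4` the gradient of `w` lies on the diagonal. -/
lemma Gmap_diag (s : ℝ) : Gmap (s, π / 4) ∈ diag := by
  have h : Vt s (π / 4) = 0 := by
    have : ∀ n, Real.cos (mR n * (π / 4)) = 0 := fun n => by
      rw [show mR n * (π / 4) = n * π + π / 2 by simp only [mR, mIdx]; push_cast; ring,
        Real.cos_add_pi_div_two, Real.sin_nat_mul_pi, neg_zero]
    simp [Vt, Cs, this]
  simp [diag, Gmap, h]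

/-! ### Analyticity off the diagonal -/

/-- the inverse `g` of `∇wᵀ : B₁ → Ω₁` is real-analytic on `Ω₁ ∖ δ`, and so is
`u(x) = ⟨x, g(x)⟩ − w(g(x))`. -/
theorem stmt12 (g : ℝ × ℝ → ℝ × ℝ)
    (hbij : Set.BijOn gradw B1 Ω1) (hinv : Set.InvOn g gradw B1 Ω1) :
    AnalyticOnNhd ℝ g (Ω1 \ diag) ∧
    AnalyticOnNhd ℝ (fun x : ℝ × ℝ => u x.1 x.2) (Ω1 \ diag) := by
  -- near a point `y₀` off the diagonal, `g = psi ∘ K` with `K` a local analytic inverse of `Gmap`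
  have key : ∀ y₀ ∈ Ω1 \ diag, ∃ K : ℝ × ℝ → ℝ × ℝ, AnalyticAt ℝ K y₀ ∧ (K y₀).1 < 0 ∧
      ∀ᶠ y in 𝓝 y₀, Gmap (K y) = y ∧ (K y).1 < 0 ∧ (K y).2 ∈ Ioo 0 (π / 2) := by
    rintro y₀ ⟨hy₀, hdiag⟩
    obtain ⟨p, hp, hpy⟩ := hbij.surjOn hy₀
    obtain ⟨z, hz1, hz2, rfl⟩ := exists_psi hp
    rw [gradw_psi hz1 hz2] at hpy
    subst hpy
    have hne : z.2 ≠ π / 4 := fun h => hdiag (by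
      have := Gmap_diag z.1
      rwa [← h] at this)
    obtain ⟨K, hK, hKz, hev⟩ := exists_local_inverse hz1 hz2 hne
    exact ⟨K, hK, by rwa [hKz], hev⟩
  refine ⟨fun y₀ hy₀ => ?_, fun y₀ hy₀ => ?_⟩
  · obtain ⟨K, hK, hK1, hev⟩ := key y₀ hy₀
    refine ((analyticAt_psi (K y₀)).comp hK).congr ?_
    filter_upwards [hev] with y ⟨hy, hy1, hy2⟩
    have := hinv.1 (psi_mem hy1 hy2)
    rw [gradw_psi hy1 hy2, hy] at this
    exact this.symm
  · obtain ⟨K, hK, hK1, hev⟩ := key y₀ hy₀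
    have hψ : AnalyticAt ℝ (fun y => psi (K y)) y₀ := (analyticAt_psi (K y₀)).comp hK
    have hψ1 : AnalyticAt ℝ (fun y => (psi (K y)).1) y₀ := analyticAt_fst.comp hψ
    have hψ2 : AnalyticAt ℝ (fun y => (psi (K y)).2) y₀ := analyticAt_snd.comp hψ
    have hS : AnalyticAt ℝ (fun y => Sn cV (K y).1 (K y).2) y₀ :=
      (adm_cV.analyticAt_Sn hK1).comp hK
    refine (((analyticAt_fst.mul hψ1).add (analyticAt_snd.mul hψ2)).sub hS).congr ?_
    have hΩ : IsOpen Ω1 := isOpen_Ioo.prod isOpen_Ioo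
    filter_upwards [hev, hΩ.mem_nhds hy₀.1] with y ⟨hy, hy1, hy2⟩ hyΩ
    have := u_eq hy1 hy2 (by rw [hy]; exact hyΩ.1.2) (by rw [hy]; exact hyΩ.2.2)
    rw [hy] at this
    exact this.symm
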